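/- arXiv:2004.14726 — 9 statements merged into one kernel-verified Lean document; each statement's English description precedes it below -/
import Mathlib

section
/- Let s ≥ 1 be an integer, q₀ = 2^s and q = 2q₀². Set 𝔤₀ = q² − 2q₀q + q, 𝔤₁ = q² − q₀q + q₀, 𝔤₂ = q² − q + 2q₀, 𝔤₃ = q², 𝔤₄ = q² + 1. Then the numbers h·𝔤₁ + i·𝔤₂ + j·𝔤₃ + k·𝔤₄, for 0 ≤ h ≤ 1, 0 ≤ i ≤ q₀−1, 0 ≤ j ≤ q−2q₀, 0 ≤ k ≤ q₀−1, are pairwise incongruent modulo 𝔤₀; in particular, since there are exactly 2q₀²(q−2q₀+1) = 𝔤₀ such four-tuples, these numbers form a complete set of representatives of the residue classes modulo 𤀀𝔤₀. -/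
/-!
The modulus factors as `𝔤₀ = q (q - 2 q₀ + 1)`. Modulo `q` the generators `𝔤₁, 𝔤₂, 𝔤₃, 𝔤₄` reduce to
`q₀, 2 q₀, 0, 1`, so the residue of the combination is `k + q₀ (h + 2 i) < q`, from which `k`, `h`
and `i` are read off as mixed-radix digits. Cancelling these terms leaves `j q² ≡ j' q²`. Since
`q = 2 q₀²`, the number `1 - 2 q₀` is an inverse of `q` modulo `q - 2 q₀ + 1`, so `j ≡ j'` modulo
`q - 2 q₀ + 1`, which exceeds both.
-/

theorem add_mul_lt_mul_of_lt {b k x n : ℕ} (hk : k < b) (hx : x < n) : k + b * x < b * n :=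
  calc k + b * x < b + b * x := by gcongr
    _ = b * (x + 1) := by ring
    _ ≤ b * n := by gcongr; exact hx

theorem eq_and_eq_of_add_mul_eq_add_mul {b k k' x x' : ℕ} (hk : k < b) (hk' : k' < b)
    (heq : k + b * x = k' + b * x') : k = k' ∧ x = x' := by
  have hb : 0 < b := k.zero_le.trans_lt hk
  obtain ⟨hdiv, hmod⟩ := (Nat.div_mod_unique hb).2 ⟨heq, hk⟩
  obtain ⟨hdiv', hmod'⟩ := (Nat.div_mod_unique hb).2 ⟨rfl, hk'⟩
  exact ⟨hmod.symm.trans hmod', hdiv.symm.trans hdiv'⟩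

theorem sq_sub_mul_add_modEq (q c r : ℕ) : q ^ 2 - c * q + r ≡ r [MOD q] := by
  have hfactor : q ^ 2 - c * q = (q - c) * q := by rw [Nat.sub_mul, sq]
  simp [hfactor, Nat.ModEq]

theorem generator_combination_modEq (q₀ q h i j k : ℕ) :
    h * (q ^ 2 - q₀ * q + q₀) + i * (q ^ 2 - q + 2 * q₀) + j * q ^ 2 + k * (q ^ 2 + 1)
      ≡ k + q₀ * (h + 2 * i) [MOD q] := by
  have hg₁ : q ^ 2 - q₀ * q + q₀ ≡ q₀ [MOD q] := sq_sub_mul_add_modEq q q₀ q₀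
  have hg₂ : q ^ 2 - q + 2 * q₀ ≡ 2 * q₀ [MOD q] := by
    simpa only [one_mul] using sq_sub_mul_add_modEq q 1 (2 * q₀)
  have hg₃ : q ^ 2 ≡ 0 [MOD q] := Nat.modEq_zero_iff_dvd.2 (dvd_pow_self q two_ne_zero)
  have hg₄ : q ^ 2 + 1 ≡ 0 + 1 [MOD q] := hg₃.add_right 1
  calc _ ≡ h * q₀ + i * (2 * q₀) + j * 0 + k * (0 + 1) [MOD q] :=
        (((hg₁.mul_left h).add (hg₂.mul_left i)).add (hg₃.mul_left j)).add (hg₄.mul_left k)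
    _ = k + q₀ * (h + 2 * i) := by ring

theorem coprime_two_mul_sq_sub_two_mul_add_one (a : ℕ) :
    Nat.Coprime (2 * a ^ 2) (2 * a ^ 2 - 2 * a + 1) := by
  have hle : 2 * a ≤ 2 * a ^ 2 := by gcongr; exact Nat.le_self_pow two_ne_zero a
  refine Nat.isCoprime_iff_coprime.1 ⟨1 - 2 * a, 1 + 2 * a, ?_⟩
  push_cast [hle]
  ring

theorem stmt_0_general {q₀ q : ℕ} (hq : 2 * q₀ ^ 2 ≤ q) (hcop : q.Coprime (q - 2 * q₀ + 1))
    (h i j k h' i' j' k' : ℕ)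
    (hh : h ≤ 1) (hi : i + 1 ≤ q₀) (hj : j ≤ q - 2 * q₀) (hk : k + 1 ≤ q₀)
    (hh' : h' ≤ 1) (hi' : i' + 1 ≤ q₀) (hj' : j' ≤ q - 2 * q₀) (hk' : k' + 1 ≤ q₀)
    (hmod : h * (q ^ 2 - q₀ * q + q₀) + i * (q ^ 2 - q + 2 * q₀) + j * q ^ 2 + k * (q ^ 2 + 1)
      ≡ h' * (q ^ 2 - q₀ * q + q₀) + i' * (q ^ 2 - q + 2 * q₀) + j' * q ^ 2 + k' * (q ^ 2 + 1)
        [MOD q ^ 2 - 2 * q₀ * q + q]) :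
    h = h' ∧ i = i' ∧ j = j' ∧ k = k' := by
  have hfactor : q ^ 2 - 2 * q₀ * q + q = q * (q - 2 * q₀ + 1) := by
    rw [mul_add_one, Nat.mul_sub, sq, mul_comm q (2 * q₀)]
  rw [hfactor] at hmod
  have digits_lt {h i k : ℕ} (hh : h ≤ 1) (hi : i < q₀) (hk : k < q₀) :
      k + q₀ * (h + 2 * i) < q :=
    calc k + q₀ * (h + 2 * i) < q₀ * (2 * q₀) :=
          add_mul_lt_mul_of_lt hk (add_mul_lt_mul_of_lt (Nat.lt_succ_of_le hh) hi)
      _ = 2 * q₀ ^ 2 := by ring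
      _ ≤ q := hq
  have hdigits : k + q₀ * (h + 2 * i) = k' + q₀ * (h' + 2 * i') :=
    Nat.ModEq.eq_of_lt_of_lt
      ((generator_combination_modEq q₀ q h i j k).symm.trans
        ((hmod.of_mul_right _).trans (generator_combination_modEq q₀ q h' i' j' k')))
      (digits_lt hh hi hk) (digits_lt hh' hi' hk')
  obtain ⟨rfl, hhi⟩ := eq_and_eq_of_add_mul_eq_add_mul hk hk' hdigits
  obtain ⟨rfl, rfl⟩ :=
    eq_and_eq_of_add_mul_eq_add_mul (Nat.lt_succ_of_le hh) (Nat.lt_succ_of_le hh') hhi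
  have hjq : j * q ^ 2 ≡ j' * q ^ 2 [MOD q - 2 * q₀ + 1] :=
    (hmod.of_mul_left q).add_right_cancel' _ |>.add_left_cancel' _
  have hjj' : j ≡ j' [MOD q - 2 * q₀ + 1] := hjq.cancel_right_of_coprime (hcop.symm.pow_right 2)
  exact ⟨rfl, rfl, hjj'.eq_of_lt_of_lt (Nat.lt_succ_of_le hj) (Nat.lt_succ_of_le hj'), rfl⟩

/-- Lemma 3.2 (Lemma `lem:apery`) of Beelen–Landi–Montanucci: the numbers
`h·𝔤₁ + i·𝔤₂ + j·𝔤₃ + k·𝔤₄` for `0 ≤ h ≤ 1`, `0 ≤ i ≤ q₀−1`, `0 ≤ j ≤ q−2q₀`,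
`0 ≤ k ≤ q₀−1` are pairwise incongruent modulo `𝔤₀`. -/
theorem stmt_0 (s : ℕ) (hs : 1 ≤ s) (q₀ q g₀ g₁ g₂ g₃ g₄ : ℕ)
    (hq₀ : q₀ = 2 ^ s) (hq : q = 2 * q₀ ^ 2)
    (hg₀ : g₀ = q ^ 2 - 2 * q₀ * q + q) (hg₁ : g₁ = q ^ 2 - q₀ * q + q₀)
    (hg₂ : g₂ = q ^ 2 - q + 2 * q₀) (hg₃ : g₃ = q ^ 2) (hg₄ : g₄ = q ^ 2 + 1) :
    ∀ h i j k h' i' j' k' : ℕ,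
      h ≤ 1 → i + 1 ≤ q₀ → j ≤ q - 2 * q₀ → k + 1 ≤ q₀ →
      h' ≤ 1 → i' + 1 ≤ q₀ → j' ≤ q - 2 * q₀ → k' + 1 ≤ q₀ →
      h * g₁ + i * g₂ + j * g₃ + k * g₄ ≡ h' * g₁ + i' * g₂ + j' * g₃ + k' * g₄ [MOD g₀] →
      h = h' ∧ i = i' ∧ j = j' ∧ k = k' := by
  subst hq hg₀ hg₁ hg₂ hg₃ hg₄
  exact stmt_0_general le_rfl (coprime_two_mul_sq_sub_two_mul_add_one q₀)
end

section
/- Let s ≥ 1 be an integer, q₀ = 2^s and q = 2q₀². Set 𝔤₀ = q² − 2q₀q + q, 𝔤₁ = q² − q₀q + q₀, 𝔤₂ = q² − q + 2q₀, 𝔤₃ = q², 𝔤₄ = q² + 1. Then the sum of the floors ⌊(h·𝔤₁ + i·𝔤₂ + j·𝔤₃ + k·𝔤₄)/𝔤₀⌋, taken over all four-tuples (h,i,j,k) with 0 ≤ h ≤ 1, 0 ≤ i ≤ q₀−1, 0 ≤ j ≤ q−2q₀, 0 ≤ k ≤ q₀−1, equals (q³ − 2q² + q)/2. -/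
/-!
Put `m = q - 2q₀ + 1`, so that `𝔤₀ = q₀ · 2 · q₀ · m`. Modulo `𝔤₀` the combination
`k𝔤₄ + h𝔤₁ + i𝔤₂ + j𝔤₃` is a mixed radix expansion with digits `k, h, i, j` in the radices
`q₀, 2, q₀, m`: the place values are `1, q₀, 2q₀, 2q₀² = q`, and each generator is its place value
times a unit modulo the corresponding radix. Hence the numerators run exactly once through the
residues modulo `𝔤₀`, and their remainders add up to `𝔤₀(𝔤₀ - 1)/2`. By the symmetry of the box
the numerators themselves average to half of the largest one, and subtracting the remainders gives
the sum of the floors.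
-/

open Finset

section CompleteResidueSystem

variable {α β : Type*} {s : Finset α} {t : Finset β} {f : α → ℕ} {g : β → ℕ}

/-- The values of `f` on the finite set `s` represent every residue class modulo `n` exactly once,
encoded as: `s` has `n` elements and `f` is injective modulo `n` on `s`. -/
structure IsCompleteResidueSystem (n : ℕ) (s : Finset α) (f : α → ℕ) : Prop where
  card_eq : #s = n
  injOn : Set.InjOn (fun x ↦ f x % n) s

namespace IsCompleteResidueSystem

variable {m n : ℕ}

theorem range_mul {u : ℕ} (h : n.Coprime u) :
    IsCompleteResidueSystem n (range n) (fun x ↦ x * u) where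
  card_eq := card_range n
  injOn _ hx _ hy hxy :=
    (Nat.ModEq.cancel_right_of_coprime h hxy).eq_of_lt_of_lt
      (mem_range.1 hx) (mem_range.1 hy)

theorem product (hf : IsCompleteResidueSystem m s f) (hg : IsCompleteResidueSystem n t g) :
    IsCompleteResidueSystem (m * n) (s ×ˢ t) (fun p ↦ f p.1 + m * g p.2) where
  card_eq := by rw [card_product, hf.card_eq, hg.card_eq]
  injOn := by
    rintro ⟨x, y⟩ hp ⟨x', y'⟩ hp' (h : f x + m * g y ≡ f x' + m * g y' [MOD m * n])
    obtain ⟨hx, hy⟩ := mem_product.1 hp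
    obtain ⟨hx', hy'⟩ := mem_product.1 hp'
    have low_digit : x = x' := hf.injOn hx hx' <| by
      simpa [Nat.ModEq] using h.of_mul_right n
    subst low_digit
    have hm : m ≠ 0 := hf.card_eq ▸ card_ne_zero_of_mem hx
    have high_digit : y = y' := hg.injOn hy hy' <|
      Nat.ModEq.mul_left_cancel' hm (Nat.ModEq.add_left_cancel' _ h)
    rw [high_digit]

theorem sum_mod (hf : IsCompleteResidueSystem n s f) : ∑ x ∈ s, f x % n = ∑ r ∈ range n, r := by
  have image_eq : s.image (fun x ↦ f x % n) = range n := by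
    refine eq_of_subset_of_card_le (fun r hr ↦ ?_) ?_
    · obtain ⟨x, hx, rfl⟩ := mem_image.1 hr
      exact mem_range.2 (Nat.mod_lt _ (hf.card_eq ▸ card_pos.2 ⟨x, hx⟩))
    · rw [card_image_of_injOn hf.injOn, hf.card_eq, card_range]
  rw [← image_eq, sum_image hf.injOn]

theorem two_mul_sum_div_add {M : ℕ} (hf : IsCompleteResidueSystem n s f) (hn : 0 < n)
    (hM : 2 * ∑ x ∈ s, f x = #s * M) : 2 * ∑ x ∈ s, f x / n + n = M + 1 := by
  have div_add_mod : n * ∑ x ∈ s, f x / n + ∑ r ∈ range n, r = ∑ x ∈ s, f x := by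
    rw [← hf.sum_mod, mul_sum, ← sum_add_distrib]
    exact sum_congr rfl fun x _ ↦ Nat.div_add_mod (f x) n
  have gauss : (∑ r ∈ range n, r) * 2 = n * (n - 1) := sum_range_id_mul_two n
  rw [hf.card_eq] at hM
  have : 2 * ∑ x ∈ s, f x / n + (n - 1) = M := by
    refine Nat.eq_of_mul_eq_mul_left hn ?_
    linear_combination 2 * div_add_mod - gauss + hM
  lia

end IsCompleteResidueSystem

theorem two_mul_sum_range_mul (n u : ℕ) :
    2 * ∑ x ∈ range n, x * u = #(range n) * ((n - 1) * u) := by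
  rw [← sum_mul, card_range]
  linear_combination u * sum_range_id_mul_two n

theorem two_mul_sum_product_add_mul {M N : ℕ} (c : ℕ) (hf : 2 * ∑ x ∈ s, f x = #s * M)
    (hg : 2 * ∑ y ∈ t, g y = #t * N) :
    2 * ∑ p ∈ s ×ˢ t, (f p.1 + c * g p.2) = #(s ×ˢ t) * (M + c * N) := by
  have split_sum : ∑ p ∈ s ×ˢ t, (f p.1 + c * g p.2)
      = #t * ∑ x ∈ s, f x + #s * (c * ∑ y ∈ t, g y) := by
    simp only [sum_product, sum_add_distrib, sum_const, smul_eq_mul, mul_sum]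
  rw [split_sum, card_product]
  linear_combination #t * hf + #s * c * hg

end CompleteResidueSystem

theorem two_mul_sum_product_mixedRadix_div_add {n₁ n₂ n₃ n₄ u₁ u₂ u₃ u₄ : ℕ}
    (hpos : 0 < n₁ * (n₂ * (n₃ * n₄))) (h₁ : n₁.Coprime u₁) (h₂ : n₂.Coprime u₂)
    (h₃ : n₃.Coprime u₃) (h₄ : n₄.Coprime u₄) :
    2 * ∑ x ∈ range n₁ ×ˢ range n₂ ×ˢ range n₃ ×ˢ range n₄,
        (x.1 * u₁ + n₁ * (x.2.1 * u₂ + n₂ * (x.2.2.1 * u₃ + n₃ * (x.2.2.2 * u₄))))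
          / (n₁ * (n₂ * (n₃ * n₄))) + n₁ * (n₂ * (n₃ * n₄))
      = (n₁ - 1) * u₁ + n₁ * ((n₂ - 1) * u₂ + n₂ * ((n₃ - 1) * u₃ + n₃ * ((n₄ - 1) * u₄))) + 1 :=
  have residues := (IsCompleteResidueSystem.range_mul h₁).product <|
    (IsCompleteResidueSystem.range_mul h₂).product <|
    (IsCompleteResidueSystem.range_mul h₃).product <| IsCompleteResidueSystem.range_mul h₄
  residues.two_mul_sum_div_add hpos <|
    two_mul_sum_product_add_mul n₁ (two_mul_sum_range_mul n₁ u₁) <|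
    two_mul_sum_product_add_mul n₂ (two_mul_sum_range_mul n₂ u₂) <|
    two_mul_sum_product_add_mul n₃ (two_mul_sum_range_mul n₃ u₃) (two_mul_sum_range_mul n₄ u₄)

theorem two_mul_sum_range_mixedRadix_div_add {n₁ n₂ n₃ n₄ u₁ u₂ u₃ u₄ : ℕ}
    (hpos : 0 < n₁ * n₂ * n₃ * n₄) (h₁ : n₁.Coprime u₁) (h₂ : n₂.Coprime u₂)
    (h₃ : n₃.Coprime u₃) (h₄ : n₄.Coprime u₄) :
    2 * ∑ h ∈ range n₂, ∑ i ∈ range n₃, ∑ j ∈ range n₄, ∑ k ∈ range n₁,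
        (h * (n₁ * u₂) + i * (n₁ * n₂ * u₃) + j * (n₁ * n₂ * n₃ * u₄) + k * u₁)
          / (n₁ * n₂ * n₃ * n₄) + n₁ * n₂ * n₃ * n₄
      = (n₂ - 1) * (n₁ * u₂) + (n₃ - 1) * (n₁ * n₂ * u₃) + (n₄ - 1) * (n₁ * n₂ * n₃ * u₄)
        + (n₁ - 1) * u₁ + 1 := by
  have modulus : n₁ * n₂ * n₃ * n₄ = n₁ * (n₂ * (n₃ * n₄)) := by ring
  have expansion (h i j k : ℕ) :
      h * (n₁ * u₂) + i * (n₁ * n₂ * u₃) + j * (n₁ * n₂ * n₃ * u₄) + k * u₁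
        = k * u₁ + n₁ * (h * u₂ + n₂ * (i * u₃ + n₃ * (j * u₄))) := by ring
  have product_form := two_mul_sum_product_mixedRadix_div_add (modulus ▸ hpos) h₁ h₂ h₃ h₄
  rw [sum_product_right] at product_form
  simp only [sum_product] at product_form
  simp only [expansion, modulus, product_form]

theorem coprime_two_mul_mul_succ_add_one (b : ℕ) :
    (2 * b * (b + 1) + 1).Coprime (2 * (b + 1) ^ 2) := by
  have two : (2 * b * (b + 1) + 1).Coprime 2 := by simp [mul_assoc]
  have succ : (2 * b * (b + 1) + 1).Coprime (b + 1) := by simp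
  exact two.mul_right (succ.pow_right 2)

theorem stmt_1_general (q₀ q g₀ g₁ g₂ g₃ g₄ : ℕ) (hq₀ : 0 < q₀) (hq : q = 2 * q₀ ^ 2)
    (hg₀ : g₀ = q ^ 2 - 2 * q₀ * q + q) (hg₁ : g₁ = q ^ 2 - q₀ * q + q₀)
    (hg₂ : g₂ = q ^ 2 - q + 2 * q₀) (hg₃ : g₃ = q ^ 2) (hg₄ : g₄ = q ^ 2 + 1) :
    ∑ h ∈ Finset.range 2, ∑ i ∈ Finset.range q₀,
      ∑ j ∈ Finset.range (q - 2 * q₀ + 1), ∑ k ∈ Finset.range q₀,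
        (h * g₁ + i * g₂ + j * g₃ + k * g₄) / g₀ = (q ^ 3 - 2 * q ^ 2 + q) / 2 := by
  -- In terms of `b = q₀ - 1` every truncated subtraction becomes a polynomial.
  obtain ⟨b, rfl⟩ : ∃ b, q₀ = b + 1 := Nat.exists_eq_add_one.2 hq₀
  have top_radix : q - 2 * (b + 1) + 1 = 2 * b * (b + 1) + 1 := by
    have : q = 2 * (b + 1) + 2 * b * (b + 1) := by rw [hq]; ring
    rw [this, Nat.add_sub_cancel_left]
  have g₀_eq : g₀ = (b + 1) * 2 * (b + 1) * (2 * b * (b + 1) + 1) := by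
    have : q ^ 2 = 2 * (b + 1) * q + 2 * b * (b + 1) * q := by rw [hq]; ring
    rw [hg₀, this, Nat.add_sub_cancel_left, hq]; ring
  have g₁_eq : g₁ = (b + 1) * (2 * ((b + 1) ^ 2 * (2 * b + 1)) + 1) := by
    have : q ^ 2 = (b + 1) * q + (b + 1) * (2 * b + 1) * q := by rw [hq]; ring
    rw [hg₁, this, Nat.add_sub_cancel_left, hq]; ring
  have g₂_eq : g₂ = (b + 1) * 2 * ((b + 1) * (2 * b ^ 2 + 4 * b + 1) + 1) := by
    have : q ^ 2 = q + (2 * b ^ 2 + 4 * b + 1) * q := by rw [hq]; ring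
    rw [hg₂, this, Nat.add_sub_cancel_left, hq]; ring
  have g₃_eq : g₃ = (b + 1) * 2 * (b + 1) * (2 * (b + 1) ^ 2) := by rw [hg₃, hq]; ring
  have g₄_eq : g₄ = (b + 1) * (4 * (b + 1) ^ 3) + 1 := by rw [hg₄, hq]; ring
  have rhs_eq : q ^ 3 - 2 * q ^ 2 + q = 2 * ((b + 1) ^ 2 * (2 * b ^ 2 + 4 * b + 1) ^ 2) := by
    have : q ^ 3 = 2 * q ^ 2 + (2 * b ^ 2 + 4 * b) * q ^ 2 := by rw [hq]; ring
    rw [this, Nat.add_sub_cancel_left, hq]; ring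
  have floor_sum := two_mul_sum_range_mixedRadix_div_add (n₁ := b + 1) (n₂ := 2) (n₃ := b + 1)
    (u₁ := (b + 1) * (4 * (b + 1) ^ 3) + 1) (u₂ := 2 * ((b + 1) ^ 2 * (2 * b + 1)) + 1)
    (u₃ := (b + 1) * (2 * b ^ 2 + 4 * b + 1) + 1)
    (by positivity) (by simp) (by simp) (by simp) (coprime_two_mul_mul_succ_add_one b)
  rw [rhs_eq, Nat.mul_div_cancel_left _ two_pos, top_radix, g₀_eq, g₁_eq, g₂_eq, g₃_eq, g₄_eq]
  refine Nat.eq_of_mul_eq_mul_left two_pos (Nat.add_right_cancel (floor_sum.trans ?_))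
  simp only [Nat.add_one_sub_one]
  ring

/-- The sum of the floors `⌊(h·𝔤₁ + i·𝔤₂ + j·𝔤₃ + k·𝔤₄)/𝔤₀⌋` over all four-tuples
`(h,i,j,k)` with `0 ≤ h ≤ 1`, `0 ≤ i ≤ q₀−1`, `0 ≤ j ≤ q−2q₀`, `0 ≤ k ≤ q₀−1`
equals `(q³ − 2q² + q)/2`. -/
theorem stmt_1 (s : ℕ) (hs : 1 ≤ s) (q₀ q g₀ g₁ g₂ g₃ g₄ : ℕ)
    (hq₀ : q₀ = 2 ^ s) (hq : q = 2 * q₀ ^ 2)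
    (hg₀ : g₀ = q ^ 2 - 2 * q₀ * q + q) (hg₁ : g₁ = q ^ 2 - q₀ * q + q₀)
    (hg₂ : g₂ = q ^ 2 - q + 2 * q₀) (hg₃ : g₃ = q ^ 2) (hg₄ : g₄ = q ^ 2 + 1) :
    ∑ h ∈ Finset.range 2, ∑ i ∈ Finset.range q₀,
      ∑ j ∈ Finset.range (q - 2 * q₀ + 1), ∑ k ∈ Finset.range q₀,
        (h * g₁ + i * g₂ + j * g₃ + k * g₄) / g₀ = (q ^ 3 - 2 * q ^ 2 + q) / 2 :=
  stmt_1_general q₀ q g₀ g₁ g₂ g₃ g₄ (hq₀ ▸ Nat.two_pow_pos s) hq hg₀ hg₁ hg₂ hg₃ hg₄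
end

section
/- Let s ≥ 1 be an integer, q₀ = 2^s and q = 2q₀². Let H be the numerical semigroup (additive submonoid of ℕ containing 0) generated by the five elements q² − 2q₀q + q, q² − q₀q + q₀, q² − q + 2q₀, q², q² + 1. Then H has exactly (q³ − 2q² + q)/2 gaps, i.e. the complement ℕ \ H has cardinality (q³ − 2q² + q)/2. -/
/-!
The generators form a telescopic sequence: with `m = q - 2q₀ + 1`, one has
`q² + 1 = m(q + 2q₀ + 1)`, and the semigroup is `mT + q²ℕ`, where `T` is generated by
`q`, `q + q₀`, `q + 2q₀`, `q + 2q₀ + 1`. In turn `T = q₀B + (q + 2q₀ + 1)ℕ` for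
`B = ⟨2q₀, 2q₀ + 1, 2q₀ + 2⟩`, and `B = 2⟨q₀, q₀ + 1⟩ + (2q₀ + 1)ℕ`.

If `c ∈ A` is prime to `d`, every integer is uniquely `cb + dk` with `0 ≤ b < d`, and it lies in
`dA + cℕ` exactly when `k ∈ A`. So the gaps of `dA + cℕ` are those of `⟨d, c⟩` (where `k < 0`),
numbering `(d - 1)(c - 1) / 2` by the symmetry `n ↦ dc - d - c - n`, together with `d` copies of
the gaps of `A`. Applying this at each of the stages above gives the count.
-/

/-- The genus of a submonoid of `ℕ`: its number of gaps. The value is `⊤`, rather than a junk `0`,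
when the complement is infinite. -/
noncomputable def genus (A : AddSubmonoid ℕ) : ℕ∞ :=
  ((A : Set ℕ)ᶜ).encard

/-- The gluing `dA + cℕ` of `A` with `ℕ`; at each stage of a telescopic sequence the new generator
`c` is adjoined to the old semigroup scaled by `d`. -/
def glue (A : AddSubmonoid ℕ) (d c : ℕ) : AddSubmonoid ℕ :=
  A.map (AddMonoidHom.mulLeft d) ⊔ AddSubmonoid.multiples c

section Glue

variable {A : AddSubmonoid ℕ} {d c : ℕ}

theorem mem_glue {n : ℕ} : n ∈ glue A d c ↔ ∃ a ∈ A, ∃ b, c * b + d * a = n := by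
  simp [glue, AddSubmonoid.mem_sup, AddSubmonoid.mem_multiples_iff, mul_comm c, add_comm]

theorem glue_closure (S : Set ℕ) (d c : ℕ) :
    glue (AddSubmonoid.closure S) d c = AddSubmonoid.closure (insert c ((d * ·) '' S)) := by
  rw [glue, AddMonoidHom.map_mclosure, AddSubmonoid.multiples_eq_closure,
    ← AddSubmonoid.closure_union, Set.union_singleton]
  rfl

theorem exists_lt_mul_add_mul_eq (hd : d ≠ 0) (hcd : c.Coprime d) (n : ℕ) :
    ∃ b < d, ∃ k : ℤ, c * b + d * k = n := by
  obtain ⟨b, hb, hmod⟩ := Nat.exists_mul_mod_eq_of_coprime n hcd hd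
  obtain ⟨k, hk⟩ := Nat.modEq_iff_dvd.1 (show c * b ≡ n [MOD d] from hmod)
  exact ⟨b, hb, k, by push_cast at hk; linarith⟩

theorem eq_and_eq_of_mul_add_mul_eq (hcd : c.Coprime d) {b b' : ℕ} (hb : b < d) (hb' : b' < d)
    {k k' : ℤ} (h : (c * b + d * k : ℤ) = c * b' + d * k') : b = b' ∧ k = k' := by
  have hmod : c * b ≡ c * b' [MOD d] := by
    rw [← Int.natCast_modEq_iff, Int.modEq_iff_dvd]
    exact ⟨k - k', by push_cast; linarith⟩
  obtain rfl : b = b' :=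
    (Nat.ModEq.cancel_left_of_coprime hcd.symm hmod).eq_of_lt_of_lt hb hb'
  have hd : (d : ℤ) ≠ 0 := by omega
  exact ⟨rfl, mul_left_cancel₀ hd (by linarith)⟩

theorem mem_glue_iff_exists_natCast_eq (hcd : c.Coprime d) (hc : c ∈ A) {n b : ℕ} {k : ℤ}
    (hb : b < d) (hn : c * b + d * k = (n : ℤ)) :
    n ∈ glue A d c ↔ ∃ a ∈ A, (a : ℤ) = k := by
  constructor
  · intro h
    obtain ⟨a, ha, b', rfl⟩ := mem_glue.1 h
    refine ⟨a + b' / d * c, add_mem ha (by simpa using nsmul_mem hc (b' / d)), ?_⟩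
    have hb' : b' % d < d := Nat.mod_lt _ (by omega)
    refine (eq_and_eq_of_mul_add_mul_eq hcd hb hb' ?_).2.symm
    have hdiv : (d * (b' / d : ℕ) + (b' % d : ℕ) : ℤ) = b' := mod_cast Nat.div_add_mod b' d
    push_cast at hn hdiv ⊢
    linear_combination hn - c * hdiv
  · rintro ⟨a, ha, rfl⟩
    exact mem_glue.2 ⟨a, ha, b, mod_cast hn⟩

theorem mem_glue_top_iff_nonneg (hcd : c.Coprime d) {n b : ℕ} {k : ℤ} (hb : b < d)
    (hn : c * b + d * k = (n : ℤ)) : n ∈ glue ⊤ d c ↔ 0 ≤ k := by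
  rw [mem_glue_iff_exists_natCast_eq hcd (AddSubmonoid.mem_top c) hb hn]
  exact ⟨by rintro ⟨a, -, rfl⟩; positivity, fun hk ↦ ⟨k.toNat, trivial, Int.toNat_of_nonneg hk⟩⟩

theorem mem_glue_top_iff_notMem_of_add_eq (hcd : c.Coprime d) {n n' : ℕ}
    (h : n + n' + 1 = (d - 1) * (c - 1)) : n ∈ glue ⊤ d c ↔ n' ∉ glue ⊤ d c := by
  have hd : d ≠ 0 := by rintro rfl; simp at h
  have hc : c ≠ 0 := by rintro rfl; simp at h
  obtain ⟨b, hb, k, hk⟩ := exists_lt_mul_add_mul_eq hd hcd n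
  have hk' : (c * (d - 1 - b : ℕ) + d * (-1 - k) : ℤ) = n' := by
    zify [Nat.one_le_iff_ne_zero.2 hd, Nat.one_le_iff_ne_zero.2 hc] at h
    rw [Nat.sub_sub, Nat.cast_sub (by omega)]
    push_cast
    linear_combination -h - hk
  rw [mem_glue_top_iff_nonneg hcd hb hk, mem_glue_top_iff_nonneg hcd (by omega) hk']
  omega

theorem mem_glue_top_of_le (hd : d ≠ 0) (hcd : c.Coprime d) {n : ℕ}
    (h : (d - 1) * (c - 1) ≤ n) : n ∈ glue ⊤ d c := by
  obtain ⟨b, hb, k, hk⟩ := exists_lt_mul_add_mul_eq hd hcd n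
  rw [mem_glue_top_iff_nonneg hcd hb hk]
  by_contra! hneg
  have hle : c * (d - 1) ≤ n + (d - 1) := by
    calc c * (d - 1) ≤ (c - 1 + 1) * (d - 1) := by gcongr; omega
      _ = (d - 1) * (c - 1) + (d - 1) := by ring
      _ ≤ n + (d - 1) := by gcongr
  zify [Nat.one_le_iff_ne_zero.2 hd] at hle hb
  nlinarith

theorem two_mul_genus_glue_top (hd : d ≠ 0) (hcd : c.Coprime d) :
    2 * genus (glue ⊤ d c) = ((d - 1) * (c - 1) : ℕ) := by
  classical
  set N := (d - 1) * (c - 1)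
  have gaps_eq : (glue ⊤ d c : Set ℕ)ᶜ = ({n ∈ Finset.range N | n ∉ glue ⊤ d c} : Finset ℕ) := by
    ext n
    simpa using fun hn ↦ lt_of_not_ge fun hle ↦ hn (mem_glue_top_of_le hd hcd hle)
  have card_gaps : ({n ∈ Finset.range N | n ∉ glue ⊤ d c}).card =
      ({n ∈ Finset.range N | n ∈ glue ⊤ d c}).card := by
    refine Finset.card_nbij' (N - 1 - ·) (N - 1 - ·) ?_ ?_ ?_ ?_
    all_goals
      intro n hn
      simp only [Finset.coe_filter, Finset.mem_range, Set.mem_ofPred_eq] at hn ⊢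
    · exact ⟨by omega, (mem_glue_top_iff_notMem_of_add_eq hcd (by omega)).2 hn.2⟩
    · exact ⟨by omega, (mem_glue_top_iff_notMem_of_add_eq hcd (by omega)).1 hn.2⟩
    · omega
    · omega
  have card_add := Finset.card_filter_add_card_filter_not (s := Finset.range N) (· ∈ glue ⊤ d c)
  rw [Finset.card_range] at card_add
  rw [genus, gaps_eq, Set.encard_coe_eq_coe_finsetCard]
  norm_cast
  omega

theorem compl_glue_eq_union (hd : d ≠ 0) (hcd : c.Coprime d) (hc : c ∈ A) :
    (glue A d c : Set ℕ)ᶜ =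
      (glue ⊤ d c : Set ℕ)ᶜ ∪ (fun p : ℕ × ℕ ↦ c * p.1 + d * p.2) '' Set.Iio d ×ˢ (A : Set ℕ)ᶜ := by
  ext n
  obtain ⟨b, hb, k, hk⟩ := exists_lt_mul_add_mul_eq hd hcd n
  have hA := mem_glue_iff_exists_natCast_eq hcd hc hb hk
  have htop := mem_glue_top_iff_nonneg hcd hb hk
  constructor
  · intro hn
    rcases lt_or_ge k 0 with hneg | hnonneg
    · exact Or.inl fun h ↦ hneg.not_ge (htop.1 h)
    · lift k to ℕ using hnonneg
      exact Or.inr ⟨(b, k), ⟨hb, fun hkA ↦ hn (hA.2 ⟨k, hkA, rfl⟩)⟩, mod_cast hk⟩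
  · rintro (hn | ⟨⟨b', a⟩, ⟨hb', ha⟩, rfl⟩) hmem
    · obtain ⟨a, -, rfl⟩ := hA.1 hmem
      exact hn (htop.2 (by positivity))
    · obtain ⟨a', ha', heq⟩ :=
        (mem_glue_iff_exists_natCast_eq hcd hc (k := a) hb' (by push_cast; rfl)).1 hmem
      exact ha (Nat.cast_injective heq ▸ ha')

theorem genus_glue (hd : d ≠ 0) (hcd : c.Coprime d) (hc : c ∈ A) :
    genus (glue A d c) = genus (glue ⊤ d c) + d * genus A := by
  have disj : Disjoint (glue ⊤ d c : Set ℕ)ᶜ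
      ((fun p : ℕ × ℕ ↦ c * p.1 + d * p.2) '' Set.Iio d ×ˢ (A : Set ℕ)ᶜ) := by
    rw [Set.disjoint_compl_left_iff_subset]
    rintro _ ⟨⟨b, a⟩, -, rfl⟩
    exact mem_glue.2 ⟨a, trivial, b, rfl⟩
  have inj : Set.InjOn (fun p : ℕ × ℕ ↦ c * p.1 + d * p.2) (Set.Iio d ×ˢ (A : Set ℕ)ᶜ) := by
    rintro ⟨b, a⟩ ⟨hb, -⟩ ⟨b', a'⟩ ⟨hb', -⟩ h
    have := eq_and_eq_of_mul_add_mul_eq hcd hb hb' (k := a) (k' := a') (mod_cast h)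
    exact Prod.ext this.1 (mod_cast this.2)
  rw [genus, compl_glue_eq_union hd hcd hc, Set.encard_union_eq disj, inj.encard_image,
    Set.encard_prod, ← Finset.coe_Iio, Set.encard_coe_eq_coe_finsetCard, Nat.card_Iio, genus, genus]

theorem two_mul_genus_closure_insert {S : Set ℕ} (hd : d ≠ 0) (hcd : c.Coprime d)
    (hc : c ∈ AddSubmonoid.closure S) :
    2 * genus (AddSubmonoid.closure (insert c ((d * ·) '' S))) =
      d * (2 * genus (AddSubmonoid.closure S)) + ((d - 1) * (c - 1) : ℕ) := by
  rw [← glue_closure, genus_glue hd hcd hc, mul_add, two_mul_genus_glue_top hd hcd]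
  ring

end Glue

section Tower

variable {n q m : ℕ}

theorem two_mul_genus_closure_two_consecutive (hn : n ≠ 0) :
    2 * genus (AddSubmonoid.closure {n + 1, n}) = (n * (n - 1) : ℕ) := by
  have htop : genus (AddSubmonoid.closure {1}) = 0 := by simp [genus]
  have h := two_mul_genus_closure_insert (S := {1}) (c := n + 1) hn (by simp) (by simp)
  rw [htop] at h
  simpa [mul_comm] using h

theorem two_mul_genus_closure_three_consecutive (hn : n ≠ 0) :
    2 * genus (AddSubmonoid.closure {2 * n + 1, 2 * (n + 1), 2 * n}) = (2 * n ^ 2 : ℕ) := by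
  have hmem : 2 * n + 1 ∈ AddSubmonoid.closure {n + 1, n} :=
    (AddSubmonoid.mem_closure_pair _ _ _).2 ⟨1, 1, by simp only [smul_eq_mul]; ring⟩
  have h := two_mul_genus_closure_insert two_ne_zero (by simp) hmem
  rw [two_mul_genus_closure_two_consecutive hn, Set.image_pair] at h
  rw [h]
  norm_cast
  obtain ⟨r, rfl⟩ := Nat.exists_eq_succ_of_ne_zero hn
  simp only [Nat.succ_eq_add_one, Nat.add_sub_cancel]
  ring

theorem two_mul_genus_closure_four_generators (hn : n ≠ 0) (hq : q = 2 * n ^ 2) :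
    2 * genus (AddSubmonoid.closure {q + 2 * n + 1, q + n, q + 2 * n, q}) =
      (2 * (n * (q - 1)) : ℕ) := by
  have hcop : (q + 2 * n + 1).Coprime n := by
    rw [show q + 2 * n + 1 = 1 + n * (2 * n + 2) by rw [hq]; ring]
    simp
  have hmem : q + 2 * n + 1 ∈ AddSubmonoid.closure {2 * n + 1, 2 * (n + 1), 2 * n} := by
    rw [show q + 2 * n + 1 = (2 * n + 1) + n • (2 * n) by rw [hq, smul_eq_mul]; ring]
    exact add_mem (AddSubmonoid.subset_closure (by simp))
      (nsmul_mem (AddSubmonoid.subset_closure (by simp)) n)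
  have himage : (n * ·) '' {2 * n + 1, 2 * (n + 1), 2 * n} = {q + n, q + 2 * n, q} := by
    rw [Set.image_insert_eq, Set.image_pair, hq]
    ring_nf
  have h := two_mul_genus_closure_insert hn hcop hmem
  rw [himage, two_mul_genus_closure_three_consecutive hn] at h
  rw [h]
  norm_cast
  obtain ⟨r, rfl⟩ := Nat.exists_eq_succ_of_ne_zero hn
  have hq1 : q - 1 = 2 * r ^ 2 + 4 * r + 1 := by rw [hq]; lia
  rw [hq1, hq]
  simp only [Nat.succ_eq_add_one, Nat.add_sub_cancel]
  ring

theorem mul_eq_sq_add_one (hq : q = 2 * n ^ 2) (hm : m + 2 * n = q + 1) :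
    m * (q + 2 * n + 1) = q ^ 2 + 1 := by
  zify at *
  linear_combination (q + 2 * n + 1 : ℤ) * hm + 2 * hq

theorem two_mul_genus_closure_five_generators (hn : n ≠ 0) (hq : q = 2 * n ^ 2)
    (hm : m + 2 * n = q + 1) :
    2 * genus (AddSubmonoid.closure {q ^ 2, q ^ 2 + 1, m * (q + n), m * (q + 2 * n), m * q}) =
      (q * (q - 1) ^ 2 : ℕ) := by
  have hq1 : 1 ≤ q := by rw [hq]; exact Nat.mul_pos two_pos (by positivity)
  have hnq : 2 * n ≤ q := by rw [hq]; gcongr; exact Nat.le_self_pow two_ne_zero n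
  have hcop : (q ^ 2).Coprime m := by
    have h : (q ^ 2).Coprime (q ^ 2 + 1) := by simp
    exact h.coprime_dvd_right ⟨_, (mul_eq_sq_add_one hq hm).symm⟩
  have hmem : q ^ 2 ∈ AddSubmonoid.closure {q + 2 * n + 1, q + n, q + 2 * n, q} := by
    rw [sq, ← smul_eq_mul]
    exact nsmul_mem (AddSubmonoid.subset_closure (by simp)) q
  have h := two_mul_genus_closure_insert (by omega) hcop hmem
  simp only [Set.image_insert_eq, Set.image_singleton, mul_eq_sq_add_one hq hm] at h
  rw [h, two_mul_genus_closure_four_generators hn hq]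
  norm_cast
  zify [hq1, show 1 ≤ m by omega, Nat.one_le_pow 2 q hq1] at *
  rw [eq_sub_of_add_eq hm]
  linear_combination (2 * (q - 1) : ℤ) * hq

theorem five_generators_eq (hq : q = 2 * n ^ 2) (hm : m + 2 * n = q + 1) :
    ({q ^ 2 - 2 * n * q + q, q ^ 2 - n * q + n, q ^ 2 - q + 2 * n, q ^ 2, q ^ 2 + 1} : Set ℕ) =
      {q ^ 2, q ^ 2 + 1, m * (q + n), m * (q + 2 * n), m * q} := by
  have hnq : 2 * n * q ≤ q ^ 2 := by
    rw [sq]; gcongr; rw [hq]; gcongr; exact Nat.le_self_pow two_ne_zero n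
  have h0 : q ^ 2 - 2 * n * q + q = m * q := by
    zify [hnq] at *; linear_combination (-q : ℤ) * hm
  have h1 : q ^ 2 - n * q + n = m * (q + n) := by
    zify [show n * q ≤ q ^ 2 by lia] at *; linear_combination (-(q + n) : ℤ) * hm - hq
  have h2 : q ^ 2 - q + 2 * n = m * (q + 2 * n) := by
    zify [Nat.le_self_pow two_ne_zero q] at *; linear_combination (-(q + 2 * n) : ℤ) * hm - 2 * hq
  rw [h0, h1, h2]
  grind

end Tower

theorem ncard_notMem_eq_of_two_mul_genus_eq {A : AddSubmonoid ℕ} {N : ℕ} (h : 2 * genus A = N) :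
    {n : ℕ | n ∉ A}.ncard = N / 2 := by
  have htoNat : 2 * {n : ℕ | n ∉ A}.ncard = N := by
    simpa only [ENat.toNat_mul, ENat.toNat_natCast, ENat.toNat_ofNat] using! congrArg ENat.toNat h
  omega

theorem stmt_2_general (q₀ q : ℕ) (hq : q = 2 * q₀ ^ 2) (H : AddSubmonoid ℕ)
    (hH : H = AddSubmonoid.closure
      {q ^ 2 - 2 * q₀ * q + q, q ^ 2 - q₀ * q + q₀, q ^ 2 - q + 2 * q₀, q ^ 2, q ^ 2 + 1}) :
    {n : ℕ | n ∉ H}.ncard = (q ^ 3 - 2 * q ^ 2 + q) / 2 := by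
  rcases eq_or_ne q₀ 0 with rfl | hq₀
  · simp [hH, hq]
  obtain ⟨m, hm⟩ : ∃ m, m + 2 * q₀ = q + 1 := ⟨q + 1 - 2 * q₀, Nat.sub_add_cancel (by nlinarith)⟩
  have hgenus : 2 * genus H = (q * (q - 1) ^ 2 : ℕ) := by
    rw [hH, five_generators_eq hq hm, two_mul_genus_closure_five_generators hq₀ hq hm]
  have hpoly : q * (q - 1) ^ 2 = q ^ 3 - 2 * q ^ 2 + q := by
    have hq2 : 2 ≤ q := by rw [hq]; exact Nat.le_mul_of_pos_right 2 (by positivity)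
    have hle : 2 * q ^ 2 ≤ q ^ 3 := by rw [pow_succ' q 2]; gcongr
    zify [hle, one_le_two.trans hq2]
    ring
  rw [ncard_notMem_eq_of_two_mul_genus_eq hgenus, hpoly]

/-- The numerical semigroup generated by `q² − 2q₀q + q`, `q² − q₀q + q₀`,
`q² − q + 2q₀`, `q²`, `q² + 1` has exactly `(q³ − 2q² + q)/2` gaps. -/
theorem stmt_2 (s : ℕ) (hs : 1 ≤ s) (q₀ q : ℕ)
    (hq₀ : q₀ = 2 ^ s) (hq : q = 2 * q₀ ^ 2)
    (H : AddSubmonoid ℕ)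
    (hH : H = AddSubmonoid.closure
      {q ^ 2 - 2 * q₀ * q + q, q ^ 2 - q₀ * q + q₀, q ^ 2 - q + 2 * q₀, q ^ 2, q ^ 2 + 1}) :
    {n : ℕ | n ∉ H}.ncard = (q ^ 3 - 2 * q ^ 2 + q) / 2 :=
  stmt_2_general q₀ q hq H hH
end

section
/- Let s ≥ 1 be an integer, q₀ = 2^s and q = 2q₀². Let H be the numerical semigroup generated by 𝔤₀ = q² − 2q₀q + q, 𝔤₁ = q² − q₀q + q₀, 𝔤₂ = q² − q + 2q₀, 𝔤₃ = q², 𝔤₄ = q² + 1. Then the Apéry set Ap(H) = { z ∈ H : z − 𝔤₀ ∉ H } (where z − 𝔤₀ is regarded as an integer, so negative values are not in H) is exactly the set A = { h·𝔤₁ + i·𝔤₂ + j·𝔤₃ + k·𝔤₄ : 0 ≤ h ≤ 1, 0 ≤ i ≤ q₀−1, 0 ≤ j ≤ q−2q₀, 0 ≤ k ≤ q₀−1 }. -/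
/-!
The relations `q₀ 𝔤₂ = (q₀ + 1) 𝔤₀`, `2 𝔤₁ = 𝔤₀ + 𝔤₂`, `q₀ 𝔤₄ = q₀ 𝔤₀ + 𝔤₁` and
`(q - 2 q₀ + 1) 𝔤₃ = q 𝔤₀` are triangular: a multiple of each generator lies in the semigroup
generated by `𝔤₀` and the generators preceding it in the order `𝔤₂, 𝔤₁, 𝔤₄, 𝔤₃`. Division with
remainder, one generator at a time, hence writes every element of `H` as an element of `A` plus a
multiple of `𝔤₀`. As `H` contains two consecutive integers, `A` meets every residue class
modulo `𝔤₀`; as `A` has at most `2 q₀² (q - 2 q₀ + 1) = 𝔤₀` elements, it meets each class exactly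
once, and so consists of the least elements of `H` in the residue classes.
-/

section AperySet

/-- The Apéry set of `H` with respect to `m`: the elements of `H` that do not remain in `H` after
subtracting `m`. The condition `z - m ∉ H`, over the integers, is phrased additively. -/
def aperySet (H : AddSubmonoid ℕ) (m : ℕ) : Set ℕ :=
  {z | z ∈ H ∧ ¬ ∃ w ∈ H, z = w + m}

variable {H : AddSubmonoid ℕ} {m : ℕ}

theorem aperySet_eq_of_injOn_natCast {A : Set ℕ} (hm : m ≠ 0) (hmH : m ∈ H) (hAH : A ⊆ H)
    (hrep : ∀ z ∈ H, ∃ a ∈ A, ∃ n : ℕ, z = a + n • m)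
    (hinj : A.InjOn (Nat.cast : ℕ → ZMod m)) : aperySet H m = A := by
  ext z
  constructor
  · rintro ⟨hz, hzm⟩
    obtain ⟨a, ha, n, rfl⟩ := hrep z hz
    cases n with
    | zero => simpa using ha
    | succ n =>
      have hw : a + n • m ∈ H := H.add_mem (hAH ha) (H.nsmul_mem hmH n)
      exact absurd ⟨a + n • m, hw, by rw [succ_nsmul, add_assoc]⟩ hzm
  · refine fun hz => ⟨hAH hz, ?_⟩
    rintro ⟨w, hw, hzw⟩
    obtain ⟨a, ha, n, rfl⟩ := hrep w hw
    have hza : z = a := hinj hz ha (by simp [hzw])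
    omega

theorem injOn_natCast_of_card_le {A : Finset ℕ} [NeZero m]
    (hres : ∀ c : ZMod m, ∃ z ∈ H, (z : ZMod m) = c)
    (hrep : ∀ z ∈ H, ∃ a ∈ A, ∃ n : ℕ, z = a + n • m) (hcard : A.card ≤ m) :
    (A : Set ℕ).InjOn (Nat.cast : ℕ → ZMod m) := by
  refine Finset.injOn_of_surjOn_of_card_le (t := Finset.univ) _ (by simp) ?_
    (by simpa [ZMod.card] using hcard)
  intro c _
  obtain ⟨z, hz, rfl⟩ := hres c
  obtain ⟨a, ha, n, rfl⟩ := hrep z hz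
  exact ⟨a, ha, by simp⟩

theorem aperySet_eq_of_card_le {A : Finset ℕ} [NeZero m] (hmH : m ∈ H) (hAH : (A : Set ℕ) ⊆ H)
    (hres : ∀ c : ZMod m, ∃ z ∈ H, (z : ZMod m) = c)
    (hrep : ∀ z ∈ H, ∃ a ∈ A, ∃ n : ℕ, z = a + n • m) (hcard : A.card ≤ m) :
    aperySet H m = A :=
  aperySet_eq_of_injOn_natCast (NeZero.ne m) hmH hAH hrep
    (injOn_natCast_of_card_le hres hrep hcard)

theorem exists_mem_natCast_eq_of_mem_of_succ_mem [NeZero m] {x : ℕ} (hx : x ∈ H)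
    (hx' : x + 1 ∈ H) (c : ZMod m) : ∃ z ∈ H, (z : ZMod m) = c := by
  refine ⟨(-c).val • x + c.val • (x + 1), H.add_mem (H.nsmul_mem hx _) (H.nsmul_mem hx' _), ?_⟩
  simp only [smul_eq_mul, Nat.cast_add, Nat.cast_mul, ZMod.natCast_val, ZMod.cast_id', id,
    Nat.cast_one]
  ring

end AperySet

theorem exists_eq_add_nsmul_of_mem_closure_insert {M : Type*} [AddCommMonoid M] {S : Set M}
    {x z : M} {d : ℕ} (hd : 0 < d) (hdx : d • x ∈ AddSubmonoid.closure S)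
    (hz : z ∈ AddSubmonoid.closure (insert x S)) :
    ∃ y ∈ AddSubmonoid.closure S, ∃ i < d, z = y + i • x := by
  rw [Set.insert_eq, AddSubmonoid.closure_union, AddSubmonoid.mem_sup] at hz
  obtain ⟨_, hn, y, hy, rfl⟩ := hz
  obtain ⟨n, rfl⟩ := AddSubmonoid.mem_closure_singleton.mp hn
  refine ⟨y + (n / d) • d • x, add_mem hy (nsmul_mem hdx _), n % d, Nat.mod_lt n hd, ?_⟩
  calc n • x + y = (n / d * d + n % d) • x + y := by rw [Nat.div_add_mod']
    _ = y + (n / d) • d • x + (n % d) • x := by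
      rw [add_nsmul, mul_nsmul']; abel

namespace Suzuki

variable (q₀ : ℕ)

/-- The number `q = 2 q₀²`. In the application to Suzuki curves `q₀` is a power of two; here it is
an arbitrary natural number. -/
def q : ℕ := 2 * q₀ ^ 2

/-- The generator `𝔤₀`. As for `𝔤₁` and `𝔤₂`, the natural subtraction never truncates. -/
def g₀ : ℕ := q q₀ ^ 2 - 2 * q₀ * q q₀ + q q₀

/-- The generator `𝔤₁`. -/
def g₁ : ℕ := q q₀ ^ 2 - q₀ * q q₀ + q₀

/-- The generator `𝔤₂`. -/
def g₂ : ℕ := q q₀ ^ 2 - q q₀ + 2 * q₀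

/-- The generator `𝔤₃`. -/
def g₃ : ℕ := q q₀ ^ 2

/-- The generator `𝔤₄`. -/
def g₄ : ℕ := q q₀ ^ 2 + 1

/-- The numerical semigroup `H` generated by `𝔤₀, …, 𝔤₄`. -/
def semigroup : AddSubmonoid ℕ :=
  AddSubmonoid.closure {g₀ q₀, g₁ q₀, g₂ q₀, g₃ q₀, g₄ q₀}

/-- The set `A` of combinations `h 𝔤₁ + i 𝔤₂ + j 𝔤₃ + k 𝔤₄` with `h < 2`, `i < q₀`,
`j < q - 2 q₀ + 1` and `k < q₀`, as a finset so that its elements can be counted. -/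
def box : Finset ℕ :=
  (Finset.range 2 ×ˢ Finset.range q₀ ×ˢ Finset.range (q q₀ - 2 * q₀ + 1) ×ˢ Finset.range q₀).image
    fun (h, i, j, k) => h * g₁ q₀ + i * g₂ q₀ + j * g₃ q₀ + k * g₄ q₀

theorem two_mul_le_q : 2 * q₀ ≤ q q₀ :=
  Nat.mul_le_mul_left 2 (Nat.le_self_pow two_ne_zero q₀)

theorem cast_g₀ : (g₀ q₀ : ℤ) = q q₀ ^ 2 - 2 * q₀ * q q₀ + q q₀ := by
  have hle : 2 * q₀ * q q₀ ≤ q q₀ ^ 2 := by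
    rw [sq]; exact Nat.mul_le_mul_right _ (two_mul_le_q q₀)
  rw [g₀]; push_cast [hle]; rfl

theorem cast_g₁ : (g₁ q₀ : ℤ) = q q₀ ^ 2 - q₀ * q q₀ + q₀ := by
  have hle : q₀ * q q₀ ≤ q q₀ ^ 2 := by
    rw [sq]; exact Nat.mul_le_mul_right _ (by linarith [two_mul_le_q q₀])
  rw [g₁]; push_cast [hle]; rfl

theorem cast_g₂ : (g₂ q₀ : ℤ) = q q₀ ^ 2 - q q₀ + 2 * q₀ := by
  have hle : q q₀ ≤ q q₀ ^ 2 := Nat.le_self_pow two_ne_zero _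
  rw [g₂]; push_cast [hle]; rfl

theorem g₀_eq_mul : g₀ q₀ = 2 * (q₀ * ((q q₀ - 2 * q₀ + 1) * q₀)) := by
  zify [two_mul_le_q q₀]
  rw [cast_g₀]; push_cast [q]; ring

theorem q₀_mul_g₂ : q₀ * g₂ q₀ = (q₀ + 1) * g₀ q₀ := by
  zify
  rw [cast_g₂, cast_g₀]; push_cast [q]; ring

theorem two_mul_g₁ : 2 * g₁ q₀ = g₀ q₀ + g₂ q₀ := by
  zify
  rw [cast_g₁, cast_g₀, cast_g₂]; ring

theorem q₀_mul_g₄ : q₀ * g₄ q₀ = q₀ * g₀ q₀ + g₁ q₀ := by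
  zify
  rw [cast_g₀, cast_g₁]; push_cast [g₄, q]; ring

theorem q_sub_add_one_mul_g₃ : (q q₀ - 2 * q₀ + 1) * g₃ q₀ = q q₀ * g₀ q₀ := by
  zify [two_mul_le_q q₀]
  rw [cast_g₀]; push_cast [g₃]; ring

variable {q₀}

theorem mem_box {a : ℕ} : a ∈ box q₀ ↔ ∃ h i j k : ℕ,
    h ≤ 1 ∧ i + 1 ≤ q₀ ∧ j ≤ q q₀ - 2 * q₀ ∧ k + 1 ≤ q₀ ∧
      a = h * g₁ q₀ + i * g₂ q₀ + j * g₃ q₀ + k * g₄ q₀ := by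
  simp only [box, Finset.mem_image, Finset.mem_product, Finset.mem_range, Prod.exists, and_assoc,
    Nat.lt_succ_iff, Nat.succ_le_iff, eq_comm (a := a)]

theorem card_box_le : (box q₀).card ≤ g₀ q₀ :=
  Finset.card_image_le.trans (by simp [g₀_eq_mul])

theorem generators_subset_semigroup :
    ({g₀ q₀, g₁ q₀, g₂ q₀, g₃ q₀, g₄ q₀} : Set ℕ) ⊆ semigroup q₀ :=
  AddSubmonoid.subset_closure

theorem box_subset_semigroup : (box q₀ : Set ℕ) ⊆ semigroup q₀ := by
  intro a ha
  obtain ⟨h, i, j, k, -, -, -, -, rfl⟩ := mem_box.mp ha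
  simp only [← smul_eq_mul]
  refine add_mem (add_mem (add_mem ?_ ?_) ?_) ?_ <;>
    exact nsmul_mem (generators_subset_semigroup (by simp)) _

theorem exists_box_add_nsmul_of_mem_semigroup (hq₀ : 0 < q₀) {z : ℕ} (hz : z ∈ semigroup q₀) :
    ∃ a ∈ box q₀, ∃ n : ℕ, z = a + n • g₀ q₀ := by
  have hz' : z ∈ AddSubmonoid.closure {g₃ q₀, g₄ q₀, g₁ q₀, g₂ q₀, g₀ q₀} :=
    AddSubmonoid.closure_mono (by grind) hz
  have hg₃ : (q q₀ - 2 * q₀ + 1) • g₃ q₀ ∈ AddSubmonoid.closure {g₄ q₀, g₁ q₀, g₂ q₀, g₀ q₀} := by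
    rw [smul_eq_mul, q_sub_add_one_mul_g₃]
    exact nsmul_mem (AddSubmonoid.mem_closure_of_mem (by simp)) _
  have hg₄ : q₀ • g₄ q₀ ∈ AddSubmonoid.closure {g₁ q₀, g₂ q₀, g₀ q₀} := by
    rw [smul_eq_mul, q₀_mul_g₄]
    exact add_mem (nsmul_mem (AddSubmonoid.mem_closure_of_mem (by simp)) _)
      (AddSubmonoid.mem_closure_of_mem (by simp))
  have hg₁ : 2 • g₁ q₀ ∈ AddSubmonoid.closure {g₂ q₀, g₀ q₀} := by
    rw [smul_eq_mul, two_mul_g₁]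
    exact add_mem (AddSubmonoid.mem_closure_of_mem (by simp))
      (AddSubmonoid.mem_closure_of_mem (by simp))
  have hg₂ : q₀ • g₂ q₀ ∈ AddSubmonoid.closure {g₀ q₀} := by
    rw [smul_eq_mul, q₀_mul_g₂]
    exact nsmul_mem (AddSubmonoid.mem_closure_of_mem (by simp)) _
  obtain ⟨y₃, hy₃, j, hj, rfl⟩ :=
    exists_eq_add_nsmul_of_mem_closure_insert (Nat.succ_pos _) hg₃ hz'
  obtain ⟨y₄, hy₄, k, hk, rfl⟩ := exists_eq_add_nsmul_of_mem_closure_insert hq₀ hg₄ hy₃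
  obtain ⟨y₁, hy₁, h, hh, rfl⟩ := exists_eq_add_nsmul_of_mem_closure_insert two_pos hg₁ hy₄
  obtain ⟨y₂, hy₂, i, hi, rfl⟩ := exists_eq_add_nsmul_of_mem_closure_insert hq₀ hg₂ hy₁
  obtain ⟨n, rfl⟩ := AddSubmonoid.mem_closure_singleton.mp hy₂
  refine ⟨_, mem_box.mpr ⟨h, i, j, k, Nat.le_of_lt_succ hh, hi, Nat.le_of_lt_succ hj, hk, rfl⟩,
    n, ?_⟩
  simp only [smul_eq_mul]
  ring

end Suzuki

open Suzuki in
theorem stmt_3_general {q₀ : ℕ} (hq₀ : 0 < q₀) :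
    aperySet (semigroup q₀) (g₀ q₀) =
      {a : ℕ | ∃ h i j k : ℕ, h ≤ 1 ∧ i + 1 ≤ q₀ ∧ j ≤ q q₀ - 2 * q₀ ∧ k + 1 ≤ q₀ ∧
        a = h * g₁ q₀ + i * g₂ q₀ + j * g₃ q₀ + k * g₄ q₀} := by
  have : NeZero (g₀ q₀) := ⟨by rw [g₀_eq_mul]; positivity⟩
  have hres (c : ZMod (g₀ q₀)) : ∃ z ∈ semigroup q₀, (z : ZMod (g₀ q₀)) = c :=
    exists_mem_natCast_eq_of_mem_of_succ_mem (x := g₃ q₀) (generators_subset_semigroup (by simp))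
      (generators_subset_semigroup (by simp [g₃, g₄])) c
  rw [aperySet_eq_of_card_le (generators_subset_semigroup (by simp)) box_subset_semigroup hres
    (fun z hz => exists_box_add_nsmul_of_mem_semigroup hq₀ hz) card_box_le]
  ext a
  exact mem_box

/-- The Apéry set `Ap(H) = { z ∈ H : z − 𝔤₀ ∉ H }` of the numerical semigroup `H`
generated by `𝔤₀, 𝔤₁, 𝔤₂, 𝔤₃, 𝔤₄` equals
`A = { h·𝔤₁ + i·𝔤₂ + j·𝔤₃ + k·𝔤₄ : 0 ≤ h ≤ 1, 0 ≤ i ≤ q₀−1, 0 ≤ j ≤ q−2q₀, 0 ≤ k ≤ q₀−1 }`.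
Here `z − 𝔤₀ ∉ H` (with `z − 𝔤₀` regarded as an integer) is expressed as
`¬ ∃ w ∈ H, z = w + 𝔤₀`. -/
theorem stmt_3 (s : ℕ) (hs : 1 ≤ s) (q₀ q g₀ g₁ g₂ g₃ g₄ : ℕ)
    (hq₀ : q₀ = 2 ^ s) (hq : q = 2 * q₀ ^ 2)
    (hg₀ : g₀ = q ^ 2 - 2 * q₀ * q + q) (hg₁ : g₁ = q ^ 2 - q₀ * q + q₀)
    (hg₂ : g₂ = q ^ 2 - q + 2 * q₀) (hg₃ : g₃ = q ^ 2) (hg₄ : g₄ = q ^ 2 + 1)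
    (H : AddSubmonoid ℕ)
    (hH : H = AddSubmonoid.closure {g₀, g₁, g₂, g₃, g₄}) :
    {z : ℕ | z ∈ H ∧ ¬ ∃ w : ℕ, w ∈ H ∧ z = w + g₀} =
      {a : ℕ | ∃ h i j k : ℕ, h ≤ 1 ∧ i + 1 ≤ q₀ ∧ j ≤ q - 2 * q₀ ∧ k + 1 ≤ q₀ ∧
        a = h * g₁ + i * g₂ + j * g₃ + k * g₄} := by
  subst hH hg₀ hg₁ hg₂ hg₃ hg₄ hq hq₀
  exact stmt_3_general (by positivity)
end

section
/- Let s ≥ 1 be an integer, q₀ = 2^s and q = 2q₀². Let H be the numerical semigroup generated by g₀ = q²−q+1, g₁ = q²−2q₀+1, g₂ = q²−q₀+1, g₃ = q², g₄ = q²+1, f_i = (i+1)q₀g₀ − i·g₄ − 1 for i = 0,…,2q₀−2, and h_j = (2j+1)q₀g₀ − j·g₄ − q₀ for j = 0,…,q₀−2. Let i be an integer with 0 ≤ i ≤ q(q−2)/2, and write i = lq + kq₀ + j with 0 ≤ j ≤ q₀−1, 0 ≤ k ≤ 2q₀−1 and l ≥ 0. Define φ₁(i) = l if j = 0 and k = 0;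 φ₁(i) = l + 1 + max{q − q₀(k + 2l + 2), 0} if j = 0 and k ≠ 0; φ₁(i) = l + 1 + max{q − q₀(⌈k/2⌉ + j + l + 1), 0} if j ≠ 0. Then φ₁(i)·g₀ + i belongs to H. -/
/-!
Since `q = 2q₀²`, the number `lq + kq₀ + j` falls short of `(l + 1)q` by a deficit `mq₀ + v`,
where `m = 2q₀ - k`, `v = 0` if `j = 0` and `m = 2q₀ - 1 - k`, `v = q₀ - j` otherwise.
Starting from `(l + 1)g₄ = (l + 1)(g₀ + q)`, replacing a summand `g₄` by `g₁`, `g₂` or `g₃` lowers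
the sum by `2q₀`, `q₀` or `1`, so the deficit can be absorbed as soon as `⌈m/2⌉ + v ≤ l + 1`.
If there are too few summands, `f_t + t g₄ + 1 = (t + 1)q₀g₀` (when `v > 0`), or
`h_t + t g₄ + q₀ = (2t + 1)q₀g₀` and possibly `h₀ + q₀ = q₀g₀` (when `v = 0`), supply `t` further
copies of `g₄`; the maximum in `φ₁` is the number of copies of `g₀` this costs.
-/

theorem nsmul_sub_nsmul_sub_nsmul_mem {G : Type*} [AddCommGroup G] {S : AddSubmonoid G}
    {g p e : G} (hg : g ∈ S) (he : g - e ∈ S) (hp : g - p ∈ S) (hpp : g - 2 • p ∈ S)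
    {n m v : ℕ} (h : (m + 1) / 2 + v ≤ n) : n • g - m • p - v • e ∈ S := by
  obtain ⟨w, hn⟩ : ∃ w, n = m / 2 + m % 2 + v + w := Nat.exists_eq_add_of_le (by lia)
  have hm : m = 2 * (m / 2) + m % 2 := (Nat.div_add_mod m 2).symm
  generalize m / 2 = a, m % 2 = b at hn hm
  subst hn hm
  have hsum : a • (g - 2 • p) + b • (g - p) + v • (g - e) + w • g ∈ S :=
    S.add_mem (S.add_mem (S.add_mem (S.nsmul_mem hpp a) (S.nsmul_mem hp b)) (S.nsmul_mem he v))
      (S.nsmul_mem hg w)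
  convert hsum using 1
  module

/-- The parameter `q = 2q₀²`; for `q₀ = 2^s` it is the order of the field of the Suzuki group
`Sz(q)`. -/
def suzukiQ (q₀ : ℕ) : ℕ := 2 * q₀ ^ 2

/-- The generator `g₀ = q² - q + 1`. -/
def gZero (q₀ : ℕ) : ℕ := suzukiQ q₀ ^ 2 - suzukiQ q₀ + 1

/-- The generator `g₄ = q² + 1`. -/
def gFour (q₀ : ℕ) : ℕ := suzukiQ q₀ ^ 2 + 1

/-- The generators `g₀, …, g₄`, `f_i` and `h_j` of `H`, in this order. None of the subtractions
is truncated. -/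
def generatorsH (q₀ : ℕ) : Set ℕ :=
  {gZero q₀, suzukiQ q₀ ^ 2 - 2 * q₀ + 1, suzukiQ q₀ ^ 2 - q₀ + 1, suzukiQ q₀ ^ 2, gFour q₀} ∪
    {x | ∃ i : ℕ, i + 2 ≤ 2 * q₀ ∧ x = (i + 1) * q₀ * gZero q₀ - i * gFour q₀ - 1} ∪
    {x | ∃ j : ℕ, j + 2 ≤ q₀ ∧ x = (2 * j + 1) * q₀ * gZero q₀ - j * gFour q₀ - q₀}

/-- The numerical semigroup `H`. -/
def semigroupH (q₀ : ℕ) : AddSubmonoid ℕ := AddSubmonoid.closure (generatorsH q₀)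

/-- The semigroup `H` viewed inside `ℤ`, so that deficits can be subtracted freely. -/
def intSemigroupH (q₀ : ℕ) : AddSubmonoid ℤ := (semigroupH q₀).map (Nat.castAddMonoidHom ℤ)

/-- The function `φ₁` at `i = lq + kq₀ + j`, in terms of the digits `l`, `k`, `j`. The truncated
subtraction encodes `max{·, 0}`, and `(k + 1) / 2` is `⌈k/2⌉`. -/
def phiOne (q₀ l k j : ℕ) : ℕ :=
  if j = 0 ∧ k = 0 then l
  else if j = 0 then l + 1 + (suzukiQ q₀ - q₀ * (k + 2 * l + 2))
  else l + 1 + (suzukiQ q₀ - q₀ * ((k + 1) / 2 + j + l + 1))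

section Generators

variable {q₀ : ℕ}

theorem natCast_mem_intSemigroupH {x : ℕ} : (x : ℤ) ∈ intSemigroupH q₀ ↔ x ∈ semigroupH q₀ :=
  AddSubmonoid.mem_map_iff_mem (f := Nat.castAddMonoidHom ℤ) Nat.cast_injective

theorem natCast_mem_of_mem_generatorsH {x : ℕ} (hx : x ∈ generatorsH q₀) :
    (x : ℤ) ∈ intSemigroupH q₀ :=
  natCast_mem_intSemigroupH.2 (AddSubmonoid.subset_closure hx)

theorem gZero_add_suzukiQ (q₀ : ℕ) : gZero q₀ + suzukiQ q₀ = gFour q₀ := by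
  have : suzukiQ q₀ ≤ suzukiQ q₀ ^ 2 := Nat.le_self_pow two_ne_zero _
  simp only [gZero, gFour]
  lia

theorem gFour_le_two_mul_gZero (q₀ : ℕ) : gFour q₀ ≤ 2 * gZero q₀ := by
  have hsum := gZero_add_suzukiQ q₀
  have hsq : 2 * suzukiQ q₀ ≤ suzukiQ q₀ ^ 2 + 1 := by
    simpa using two_mul_le_add_sq (suzukiQ q₀) 1
  simp only [gFour] at hsum ⊢
  lia

theorem two_mul_le_suzukiQ_sq (q₀ : ℕ) : 2 * q₀ ≤ suzukiQ q₀ ^ 2 :=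
  calc 2 * q₀ ≤ 2 * q₀ ^ 2 := Nat.mul_le_mul_left 2 (Nat.le_self_pow two_ne_zero q₀)
    _ ≤ suzukiQ q₀ ^ 2 := Nat.le_self_pow two_ne_zero _

theorem gFour_mem (q₀ : ℕ) : (gFour q₀ : ℤ) ∈ intSemigroupH q₀ :=
  natCast_mem_of_mem_generatorsH (by simp [generatorsH])

theorem gFour_sub_one_mem (q₀ : ℕ) : (gFour q₀ : ℤ) - 1 ∈ intSemigroupH q₀ := by
  have hmem : ((suzukiQ q₀ ^ 2 : ℕ) : ℤ) ∈ intSemigroupH q₀ :=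
    natCast_mem_of_mem_generatorsH (by simp [generatorsH])
  simpa [gFour] using hmem

theorem gFour_sub_mem (q₀ : ℕ) : (gFour q₀ : ℤ) - q₀ ∈ intSemigroupH q₀ := by
  have hmem : ((suzukiQ q₀ ^ 2 - q₀ + 1 : ℕ) : ℤ) ∈ intSemigroupH q₀ :=
    natCast_mem_of_mem_generatorsH (by simp [generatorsH])
  have hle := two_mul_le_suzukiQ_sq q₀
  convert hmem using 1
  simp only [gFour]
  lia

theorem gFour_sub_two_mul_mem (q₀ : ℕ) : (gFour q₀ : ℤ) - 2 * q₀ ∈ intSemigroupH q₀ := by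
  have hmem : ((suzukiQ q₀ ^ 2 - 2 * q₀ + 1 : ℕ) : ℤ) ∈ intSemigroupH q₀ :=
    natCast_mem_of_mem_generatorsH (by simp [generatorsH])
  have hle := two_mul_le_suzukiQ_sq q₀
  convert hmem using 1
  simp only [gFour]
  lia

theorem fGenerator_mem {t : ℕ} (ht : t + 2 ≤ 2 * q₀) :
    ((t + 1) * q₀ * gZero q₀ - t * gFour q₀ - 1 : ℤ) ∈ intSemigroupH q₀ := by
  have hmem := natCast_mem_of_mem_generatorsH (q₀ := q₀) (Or.inl (Or.inr ⟨t, ht, rfl⟩))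
  have hcoeff : 2 * t + 1 ≤ (t + 1) * q₀ := by nlinarith [Nat.le_self_pow two_ne_zero t]
  have hle : t * gFour q₀ + 1 ≤ (t + 1) * q₀ * gZero q₀ :=
    calc t * gFour q₀ + 1 ≤ t * (2 * gZero q₀) + gZero q₀ :=
          add_le_add (Nat.mul_le_mul_left t (gFour_le_two_mul_gZero q₀)) (Nat.succ_pos _)
      _ = (2 * t + 1) * gZero q₀ := by ring
      _ ≤ (t + 1) * q₀ * gZero q₀ := Nat.mul_le_mul_right _ hcoeff
  rw [Nat.sub_sub, Nat.cast_sub hle] at hmem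
  convert hmem using 1
  push_cast
  ring

theorem hGenerator_mem {t : ℕ} (ht : t + 2 ≤ q₀) :
    ((2 * t + 1) * q₀ * gZero q₀ - t * gFour q₀ - q₀ : ℤ) ∈ intSemigroupH q₀ := by
  have hmem := natCast_mem_of_mem_generatorsH (q₀ := q₀) (Or.inr ⟨t, ht, rfl⟩)
  have hcoeff : 2 * t + q₀ ≤ (2 * t + 1) * q₀ := by nlinarith
  have hle : t * gFour q₀ + q₀ ≤ (2 * t + 1) * q₀ * gZero q₀ :=
    calc t * gFour q₀ + q₀ ≤ t * (2 * gZero q₀) + q₀ * gZero q₀ :=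
          add_le_add (Nat.mul_le_mul_left t (gFour_le_two_mul_gZero q₀))
            (Nat.le_mul_of_pos_right q₀ (Nat.succ_pos _))
      _ = (2 * t + q₀) * gZero q₀ := by ring
      _ ≤ (2 * t + 1) * q₀ * gZero q₀ := Nat.mul_le_mul_right _ hcoeff
  rw [Nat.sub_sub, Nat.cast_sub hle] at hmem
  convert hmem using 1
  push_cast
  ring

end Generators

section Deficits

variable {q₀ n m v : ℕ}

theorem mul_gFour_sub_mem (h : (m + 1) / 2 + v ≤ n) :
    (n * gFour q₀ - m * q₀ - v : ℤ) ∈ intSemigroupH q₀ := by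
  simpa using nsmul_sub_nsmul_sub_nsmul_mem (gFour_mem q₀) (gFour_sub_one_mem q₀)
    (gFour_sub_mem q₀) (by simpa using gFour_sub_two_mul_mem q₀) h

theorem mul_gFour_sub_add_mem_of_pos (hv : 0 < v) (h : (m + 1) / 2 + v + 1 ≤ 2 * q₀ + n) :
    (n * gFour q₀ - m * q₀ - v + ((m + 1) / 2 + v - n : ℕ) * q₀ * gZero q₀ : ℤ) ∈
      intSemigroupH q₀ := by
  rcases le_or_gt ((m + 1) / 2 + v) n with hle | hlt
  · simpa [Nat.sub_eq_zero_of_le hle] using mul_gFour_sub_mem (q₀ := q₀) hle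
  · obtain ⟨t, ht⟩ : ∃ t, (m + 1) / 2 + v = n + t + 1 := Nat.exists_eq_add_of_lt hlt
    obtain ⟨u, rfl⟩ : ∃ u, v = u + 1 := Nat.exists_eq_succ_of_ne_zero hv.ne'
    have hrest : (((n + t : ℕ) : ℤ) * gFour q₀ - m * q₀ - u) ∈ intSemigroupH q₀ :=
      mul_gFour_sub_mem (by lia)
    have hf := fGenerator_mem (q₀ := q₀) (t := t) (by lia)
    convert add_mem hrest hf using 1
    rw [show (m + 1) / 2 + (u + 1) - n = t + 1 by lia]
    push_cast
    ring

theorem mul_gFour_sub_add_mem (h : m + 2 ≤ 2 * q₀ + 2 * n) :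
    (n * gFour q₀ - m * q₀ + (m - 2 * n : ℕ) * q₀ * gZero q₀ : ℤ) ∈ intSemigroupH q₀ := by
  rcases le_or_gt m (2 * n) with hle | hlt
  · simpa [Nat.sub_eq_zero_of_le hle] using
      mul_gFour_sub_mem (q₀ := q₀) (n := n) (m := m) (v := 0) (by lia)
  · obtain ⟨r, rfl⟩ : ∃ r, m = 2 * n + r + 1 := Nat.exists_eq_add_of_lt hlt
    rw [show 2 * n + r + 1 - 2 * n = r + 1 by lia]
    have hrest (t : ℕ) : (n + t) • (gFour q₀ - 2 * q₀ : ℤ) ∈ intSemigroupH q₀ :=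
      nsmul_mem (gFour_sub_two_mul_mem q₀) _
    obtain ⟨t, rfl | rfl⟩ := Nat.even_or_odd' r
    · convert add_mem (hrest t) (hGenerator_mem (q₀ := q₀) (t := t) (by lia)) using 1
      push_cast [nsmul_eq_mul]
      ring
    · convert add_mem (hrest t) (add_mem (hGenerator_mem (q₀ := q₀) (t := t) (by lia))
        (hGenerator_mem (q₀ := q₀) (t := 0) (by lia))) using 1
      push_cast [nsmul_eq_mul]
      ring

end Deficits

section Digits

variable {q₀ k j : ℕ}

theorem suzukiQ_sub_mul (q₀ a : ℕ) : suzukiQ q₀ - q₀ * a = (2 * q₀ - a) * q₀ := by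
  rw [suzukiQ, Nat.sub_mul, mul_comm a, pow_two, mul_assoc]

theorem mul_gZero_add_mul_suzukiQ_mem (q₀ l : ℕ) :
    l * gZero q₀ + l * suzukiQ q₀ ∈ semigroupH q₀ := by
  rw [← mul_add, gZero_add_suzukiQ, ← smul_eq_mul]
  exact nsmul_mem (natCast_mem_intSemigroupH.1 (gFour_mem q₀)) l

theorem mul_gZero_add_digits_mem (l : ℕ) (hk : k ≤ 2 * q₀) :
    (l + 1 + (suzukiQ q₀ - q₀ * (k + 2 * l + 2))) * gZero q₀ + (l * suzukiQ q₀ + k * q₀) ∈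
      semigroupH q₀ := by
  obtain ⟨m, hm⟩ : ∃ m, 2 * q₀ = k + m := Nat.exists_eq_add_of_le hk
  have hmem := mul_gFour_sub_add_mem (q₀ := q₀) (n := l + 1) (m := m) (by lia)
  rw [← natCast_mem_intSemigroupH, suzukiQ_sub_mul,
    show 2 * q₀ - (k + 2 * l + 2) = m - 2 * (l + 1) by lia]
  convert hmem using 1
  rw [← gZero_add_suzukiQ]
  have hq : suzukiQ q₀ = (k + m) * q₀ := by
    rw [suzukiQ, ← hm]
    ring
  zify at hq
  push_cast
  linear_combination -hq

theorem mul_gZero_add_digits_mem_of_pos (l : ℕ) (hj₀ : 0 < j) (hj : j < q₀) (hk : k < 2 * q₀) :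
    (l + 1 + (suzukiQ q₀ - q₀ * ((k + 1) / 2 + j + l + 1))) * gZero q₀ +
      (l * suzukiQ q₀ + k * q₀ + j) ∈ semigroupH q₀ := by
  obtain ⟨m, hm⟩ : ∃ m, 2 * q₀ = k + m + 1 := Nat.exists_eq_add_of_lt hk
  obtain ⟨v, hv⟩ : ∃ v, q₀ = j + v := Nat.exists_eq_add_of_le hj.le
  have hmem := mul_gFour_sub_add_mem_of_pos (q₀ := q₀) (n := l + 1) (m := m) (v := v)
    (by lia) (by lia)
  rw [← natCast_mem_intSemigroupH, suzukiQ_sub_mul,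
    show 2 * q₀ - ((k + 1) / 2 + j + l + 1) = (m + 1) / 2 + v - (l + 1) by lia]
  convert hmem using 1
  rw [← gZero_add_suzukiQ]
  have hq : suzukiQ q₀ = (k + m) * q₀ + (j + v) := by
    rw [suzukiQ, ← hv]
    linear_combination q₀ * hm
  zify at hq
  push_cast
  linear_combination -hq

end Digits

theorem stmt_5_general {q₀ k j : ℕ} (l : ℕ) (hj : j < q₀) (hk : k < 2 * q₀) :
    phiOne q₀ l k j * gZero q₀ + (l * suzukiQ q₀ + k * q₀ + j) ∈ semigroupH q₀ := by
  rw [phiOne]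
  split_ifs with hjk hj₀
  · obtain ⟨rfl, rfl⟩ := hjk
    simpa using mul_gZero_add_mul_suzukiQ_mem q₀ l
  · subst hj₀
    exact mul_gZero_add_digits_mem l hk.le
  · exact mul_gZero_add_digits_mem_of_pos l (Nat.pos_of_ne_zero hj₀) hj hk

/-- Lemma `lem:phi1`: if `0 ≤ i ≤ q(q−2)/2` is written as `i = lq + kq₀ + j` with
`0 ≤ j ≤ q₀−1`, `0 ≤ k ≤ 2q₀−1`, `l ≥ 0`, then `φ₁(i)·g₀ + i` belongs to the
numerical semigroup `H` generated by `g₀, g₁, g₂, g₃, g₄`, the `f_i` and the `h_j`.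
Here `max{x − y, 0}` for naturals is truncated subtraction `x - y`, and
`⌈k/2⌉ = (k+1)/2`. -/
theorem stmt_5 (s : ℕ) (hs : 1 ≤ s) (q₀ q g₀ g₁ g₂ g₃ g₄ : ℕ)
    (hq₀ : q₀ = 2 ^ s) (hq : q = 2 * q₀ ^ 2)
    (hg₀ : g₀ = q ^ 2 - q + 1) (hg₁ : g₁ = q ^ 2 - 2 * q₀ + 1)
    (hg₂ : g₂ = q ^ 2 - q₀ + 1) (hg₃ : g₃ = q ^ 2) (hg₄ : g₄ = q ^ 2 + 1)
    (H : AddSubmonoid ℕ)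
    (hH : H = AddSubmonoid.closure
      ({g₀, g₁, g₂, g₃, g₄} ∪
        {x | ∃ i : ℕ, i + 2 ≤ 2 * q₀ ∧ x = (i + 1) * q₀ * g₀ - i * g₄ - 1} ∪
        {x | ∃ j : ℕ, j + 2 ≤ q₀ ∧ x = (2 * j + 1) * q₀ * g₀ - j * g₄ - q₀})) :
    ∀ i l k j : ℕ, i ≤ q * (q - 2) / 2 → i = l * q + k * q₀ + j →
      j + 1 ≤ q₀ → k + 1 ≤ 2 * q₀ →
      (if j = 0 ∧ k = 0 then l
       else if j = 0 then l + 1 + (q - q₀ * (k + 2 * l + 2))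
       else l + 1 + (q - q₀ * ((k + 1) / 2 + j + l + 1))) * g₀ + i ∈ H := by
  rintro i l k j - rfl hj hk
  subst hH hg₀ hg₁ hg₂ hg₃ hg₄ hq
  exact stmt_5_general l hj hk
end

section
/- Let s ≥ 1 be an integer, q₀ = 2^s and q = 2q₀². Let H be the numerical semigroup generated by g₀ = q²−q+1, g₁ = q²−2q₀+1, g₂ = q²−q₀+1, g₃ = q², g₄ = q²+1, f_i = (i+1)q₀g₀ − i·g₄ − 1 for i = 0,…,2q₀−2, and h_j = (2j+1)q₀g₀ − j·g₄ − q₀ for j = 0,…,q₀−2. Let i be an integer with q(q−2)/2 + 1 ≤ i ≤ g₀ − 1 = q² − q, set i′ = g₀ − 1 − i, and write i′ = lq + kq₀ + j with 0 ≤ j ≤ q₀−1, 0 ≤ k ≤ 2q₀−1 and l ≥ 0. Define φ₂(i) = q − l − 1 − max{q − q₀(k + 2l + 1), 0} if j = q₀−1, and φ₂(i) = q − l − 1 − max{q − q₀(⌈k/2⌉ + j + l + 1), 0} if j ≠ q₀−1. Then φ₂(i)·g₀ + i belongs to H. -/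
/-!
Since `g₄ = g₀ + q` and `i + (lq + kq₀ + j) + 1 = g₀`, the number `x = φ₂(i)g₀ + i` can be written
in one of two ways. If the maximum in `φ₂` is `0`, then `x = Ng₄ - (kq₀ + j)` with `N = q - l - 1`.
Otherwise `x = q₀Mg₀ - lg₄ - (kq₀ + j + 1)`, where `M` is `k + 2l + 1` or `⌈k/2⌉ + j + l + 1`.
The deficits `2q₀`, `q₀`, `1` of `g₁`, `g₂`, `g₃` with respect to `g₄` let `⌈k/2⌉ + j` of these
generators absorb `kq₀ + j`. This settles the first form, and the second one after splitting off
`f_{M-1}`; if `j = q₀ - 1`, then `x = h_l + k h_0` instead, unless `l = q₀ - 1`, which forces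
`k = 0` and makes `M - 1 = 2l` the index of an `f` again.
-/

namespace SemigroupH

/-- The parameter `q = 2q₀²`. -/
def q (q₀ : ℕ) : ℕ := 2 * q₀ ^ 2

/-- The generator `g₀ = q² - q + 1`. -/
def g₀ (q₀ : ℕ) : ℕ := q q₀ ^ 2 - q q₀ + 1

/-- The generator `g₁ = q² - 2q₀ + 1`. -/
def g₁ (q₀ : ℕ) : ℕ := q q₀ ^ 2 - 2 * q₀ + 1

/-- The generator `g₂ = q² - q₀ + 1`. -/
def g₂ (q₀ : ℕ) : ℕ := q q₀ ^ 2 - q₀ + 1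

/-- The generator `g₃ = q²`. -/
def g₃ (q₀ : ℕ) : ℕ := q q₀ ^ 2

/-- The generator `g₄ = q² + 1`. -/
def g₄ (q₀ : ℕ) : ℕ := q q₀ ^ 2 + 1

/-- The generator `f_i`; the subtractions do not truncate for `i + 2 ≤ 2q₀`. -/
def f (q₀ i : ℕ) : ℕ := (i + 1) * q₀ * g₀ q₀ - i * g₄ q₀ - 1

/-- The generator `h_j`; the subtractions do not truncate for `0 < q₀`. -/
def h (q₀ j : ℕ) : ℕ := (2 * j + 1) * q₀ * g₀ q₀ - j * g₄ q₀ - q₀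

/-- The numerical semigroup `H`, for an arbitrary natural number `q₀`. -/
def H (q₀ : ℕ) : AddSubmonoid ℕ :=
  AddSubmonoid.closure
    ({g₀ q₀, g₁ q₀, g₂ q₀, g₃ q₀, g₄ q₀} ∪ {x | ∃ i : ℕ, i + 2 ≤ 2 * q₀ ∧ x = f q₀ i} ∪
      {x | ∃ j : ℕ, j + 2 ≤ q₀ ∧ x = h q₀ j})

/-- The value `φ₂(i)`, as a function of the digits `l`, `k`, `j` of `g₀ - 1 - i`. Truncated
subtraction encodes `max{x - y, 0}`, and `(k + 1) / 2` is `⌈k/2⌉`. -/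
def φ₂ (q₀ l k j : ℕ) : ℕ :=
  if j = q₀ - 1 then q q₀ - l - 1 - (q q₀ - q₀ * (k + 2 * l + 1))
  else q q₀ - l - 1 - (q q₀ - q₀ * ((k + 1) / 2 + j + l + 1))

lemma g₀_add_q (q₀ : ℕ) : g₀ q₀ + q q₀ = g₄ q₀ := by
  have : q q₀ ≤ q q₀ ^ 2 := Nat.le_self_pow two_ne_zero _
  unfold g₀ g₄
  omega

lemma two_mul_le_q_sq (q₀ : ℕ) : 2 * q₀ ≤ q q₀ ^ 2 :=
  calc 2 * q₀ ≤ q q₀ := Nat.mul_le_mul_left 2 (Nat.le_self_pow two_ne_zero q₀)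
    _ ≤ q q₀ ^ 2 := Nat.le_self_pow two_ne_zero _

lemma g₁_add (q₀ : ℕ) : g₁ q₀ + 2 * q₀ = g₄ q₀ := by
  have := two_mul_le_q_sq q₀
  unfold g₁ g₄
  omega

lemma g₂_add (q₀ : ℕ) : g₂ q₀ + q₀ = g₄ q₀ := by
  have := two_mul_le_q_sq q₀
  unfold g₂ g₄
  omega

lemma g₃_add_one (q₀ : ℕ) : g₃ q₀ + 1 = g₄ q₀ := rfl

lemma g₀_pos (q₀ : ℕ) : 0 < g₀ q₀ := Nat.succ_pos _

lemma g₄_le_two_mul_g₀ (q₀ : ℕ) : g₄ q₀ ≤ 2 * g₀ q₀ := by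
  have hg₀ := g₀_add_q q₀
  have hq : 2 * q q₀ ≤ q q₀ ^ 2 + 1 := by nlinarith [two_mul_le_add_sq (q q₀) 1]
  unfold g₄ at *
  omega

variable {q₀ : ℕ}

lemma f_add {i : ℕ} (hi : i + 2 ≤ 2 * q₀) :
    f q₀ i + i * g₄ q₀ + 1 = (i + 1) * q₀ * g₀ q₀ := by
  have hcoeff : 2 * i + 1 ≤ (i + 1) * q₀ := by nlinarith [Nat.le_mul_self i]
  have hle : i * g₄ q₀ + 1 ≤ (i + 1) * q₀ * g₀ q₀ :=
    calc i * g₄ q₀ + 1 ≤ i * (2 * g₀ q₀) + g₀ q₀ :=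
          add_le_add (Nat.mul_le_mul_left i (g₄_le_two_mul_g₀ q₀)) (g₀_pos q₀)
      _ = (2 * i + 1) * g₀ q₀ := by ring
      _ ≤ (i + 1) * q₀ * g₀ q₀ := Nat.mul_le_mul_right _ hcoeff
  unfold f
  omega

lemma h_add (hq₀ : 0 < q₀) (j : ℕ) :
    h q₀ j + j * g₄ q₀ + q₀ = (2 * j + 1) * q₀ * g₀ q₀ := by
  have hle : j * g₄ q₀ + q₀ ≤ (2 * j + 1) * q₀ * g₀ q₀ :=
    calc j * g₄ q₀ + q₀ ≤ j * (2 * g₀ q₀) * q₀ + q₀ * g₀ q₀ :=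
          add_le_add
            ((Nat.mul_le_mul_left j (g₄_le_two_mul_g₀ q₀)).trans (Nat.le_mul_of_pos_right _ hq₀))
            (Nat.le_mul_of_pos_right _ (g₀_pos q₀))
      _ = (2 * j + 1) * q₀ * g₀ q₀ := by ring
  unfold h
  omega

lemma g₁_mem_H (q₀ : ℕ) : g₁ q₀ ∈ H q₀ := AddSubmonoid.subset_closure (by simp)

lemma g₂_mem_H (q₀ : ℕ) : g₂ q₀ ∈ H q₀ := AddSubmonoid.subset_closure (by simp)

lemma g₃_mem_H (q₀ : ℕ) : g₃ q₀ ∈ H q₀ := AddSubmonoid.subset_closure (by simp)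

lemma g₄_mem_H (q₀ : ℕ) : g₄ q₀ ∈ H q₀ := AddSubmonoid.subset_closure (by simp)

lemma f_mem_H {i : ℕ} (hi : i + 2 ≤ 2 * q₀) : f q₀ i ∈ H q₀ :=
  AddSubmonoid.subset_closure (Or.inl (Or.inr ⟨i, hi, rfl⟩))

lemma h_mem_H {j : ℕ} (hj : j + 2 ≤ q₀) : h q₀ j ∈ H q₀ :=
  AddSubmonoid.subset_closure (Or.inr ⟨j, hj, rfl⟩)

lemma exists_mem_H_add_eq_mul_g₄ (q₀ k j : ℕ) :
    ∃ y ∈ H q₀, y + (k * q₀ + j) = ((k + 1) / 2 + j) * g₄ q₀ := by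
  refine ⟨(k / 2) • g₁ q₀ + (k % 2) • g₂ q₀ + j • g₃ q₀,
    add_mem (add_mem (nsmul_mem (g₁_mem_H q₀) _) (nsmul_mem (g₂_mem_H q₀) _))
      (nsmul_mem (g₃_mem_H q₀) _), ?_⟩
  have hk : k = 2 * (k / 2) + k % 2 := (Nat.div_add_mod k 2).symm
  have hceil : (k + 1) / 2 = k / 2 + k % 2 := by omega
  rw [hceil]
  simp only [smul_eq_mul]
  linear_combination q₀ * hk + (k / 2) * g₁_add q₀ + (k % 2) * g₂_add q₀ + j * g₃_add_one q₀

variable {A i j k l M N x : ℕ}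

lemma mem_H_of_add_eq_mul_g₄ (hN : (k + 1) / 2 + j ≤ N)
    (hx : x + (k * q₀ + j) = N * g₄ q₀) : x ∈ H q₀ := by
  obtain ⟨y, hy, hy_add⟩ := exists_mem_H_add_eq_mul_g₄ q₀ k j
  obtain ⟨B, rfl⟩ := Nat.exists_eq_add_of_le hN
  have hxy : x = y + B • g₄ q₀ := by
    rw [add_mul, ← hy_add] at hx
    rw [smul_eq_mul]
    omega
  exact hxy ▸ add_mem hy (nsmul_mem (g₄_mem_H q₀) B)

lemma mem_H_of_add_eq_ceil_mul_g₀ (hM : (k + 1) / 2 + j + l + 1 < 2 * q₀)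
    (hx : x + l * g₄ q₀ + (k * q₀ + j) + 1 = q₀ * ((k + 1) / 2 + j + l + 1) * g₀ q₀) :
    x ∈ H q₀ := by
  obtain ⟨y, hy, hy_add⟩ := exists_mem_H_add_eq_mul_g₄ q₀ k j
  have hf_add := f_add hM
  have hxy : x = f q₀ ((k + 1) / 2 + j + l) + y := by
    rw [mul_comm q₀] at hx
    rw [add_mul _ l] at hf_add
    omega
  exact hxy ▸ add_mem (f_mem_H hM) hy

lemma mem_H_of_add_eq_linear_mul_g₀ (hl : l + 2 ≤ q₀)
    (hx : x + l * g₄ q₀ + (k + 1) * q₀ = q₀ * (k + 2 * l + 1) * g₀ q₀) : x ∈ H q₀ := by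
  have hl_add := h_add (by omega : 0 < q₀) l
  have h0_add := h_add (by omega : 0 < q₀) 0
  have hxh : x = h q₀ l + k • h q₀ 0 := by
    rw [smul_eq_mul]
    zify at *
    linear_combination hx - hl_add - k * h0_add
  exact hxh ▸ add_mem (h_mem_H hl) (nsmul_mem (h_mem_H (by omega)) k)

lemma mul_g₀_add_eq_mul_g₄ (hi : i + (l * q q₀ + k * q₀ + j) + 1 = g₀ q₀)
    (hA : A + l + 1 = q q₀) : A * g₀ q₀ + i + (k * q₀ + j) = A * g₄ q₀ := by
  have hg₀ : g₀ q₀ + q q₀ = q q₀ ^ 2 + 1 := g₀_add_q q₀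
  have hg₄ := g₀_add_q q₀
  zify at *
  linear_combination hi + A * hg₄ + hg₀ - q q₀ * hA

lemma mul_g₀_add_eq_mul_g₀ (hi : i + (l * q q₀ + k * q₀ + j) + 1 = g₀ q₀)
    (hA : A + l + 1 = M) : A * g₀ q₀ + i + l * g₄ q₀ + (k * q₀ + j) + 1 = M * g₀ q₀ := by
  rw [← hA, ← g₀_add_q]
  linear_combination hi

lemma lt_sq_of_lower_bound (hi : i + (l * q q₀ + k * q₀ + j) + 1 = g₀ q₀)
    (hlower : q q₀ * (q q₀ - 2) / 2 + 1 ≤ i) : l < q₀ ^ 2 := by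
  have hhalf : q q₀ * (q q₀ - 2) / 2 = q₀ ^ 2 * (q q₀ - 2) := by
    rw [q, mul_assoc, Nat.mul_div_cancel_left _ two_pos]
  have hg₀ : g₀ q₀ + q q₀ = q q₀ ^ 2 + 1 := g₀_add_q q₀
  by_contra! hl
  have hlq : q₀ ^ 2 * q q₀ ≤ l * q q₀ := Nat.mul_le_mul_right _ hl
  have hq : q q₀ ^ 2 = q₀ ^ 2 * q q₀ + q₀ ^ 2 * q q₀ := by unfold q; ring
  have hsub : q₀ ^ 2 * q q₀ ≤ q₀ ^ 2 * (q q₀ - 2) + q q₀ := by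
    rw [Nat.mul_sub]
    unfold q
    omega
  omega

lemma q_sub_mul_g₀_add_mem_H (hi : i + (l * q q₀ + k * q₀ + j) + 1 = g₀ q₀)
    (hl : l < q₀ ^ 2) (hj : j + 1 ≤ q₀) (hk : k + 1 ≤ 2 * q₀) :
    (q q₀ - l - 1) * g₀ q₀ + i ∈ H q₀ := by
  have hsq : 2 * q₀ ≤ q₀ ^ 2 + 1 := by nlinarith [two_mul_le_add_sq q₀ 1]
  have hq : q q₀ = 2 * q₀ ^ 2 := rfl
  exact mem_H_of_add_eq_mul_g₄ (by omega) (mul_g₀_add_eq_mul_g₄ hi (by omega))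

lemma lt_two_mul_of_mul_lt_q (hM : q₀ * M < q q₀) : M < 2 * q₀ :=
  lt_of_mul_lt_mul_left' (a := q₀) (hM.trans_eq (by unfold q; ring))

lemma q_sub_sub_linear_mul_g₀_add_mem_H (hi : i + (l * q q₀ + k * q₀ + j) + 1 = g₀ q₀)
    (hl : l < q₀ ^ 2) (hj : j + 1 = q₀) (hk : k + 1 ≤ 2 * q₀) :
    (q q₀ - l - 1 - (q q₀ - q₀ * (k + 2 * l + 1))) * g₀ q₀ + i ∈ H q₀ := by
  rcases le_or_gt (q q₀) (q₀ * (k + 2 * l + 1)) with hmax | hmax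
  · rw [Nat.sub_eq_zero_of_le hmax, Nat.sub_zero]
    exact q_sub_mul_g₀_add_mem_H hi hl hj.le hk
  have hM : k + 2 * l + 1 < 2 * q₀ := lt_two_mul_of_mul_lt_q hmax
  have hle : k + 2 * l + 1 ≤ q₀ * (k + 2 * l + 1) := Nat.le_mul_of_pos_left _ (by omega)
  have hx := mul_g₀_add_eq_mul_g₀ hi
    (A := q q₀ - l - 1 - (q q₀ - q₀ * (k + 2 * l + 1))) (M := q₀ * (k + 2 * l + 1)) (by omega)
  rcases le_or_gt (l + 2) q₀ with hlq₀ | hlq₀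
  · exact mem_H_of_add_eq_linear_mul_g₀ (k := k) hlq₀ (by rw [add_one_mul]; omega)
  · obtain rfl : k = 0 := by omega
    obtain rfl : j = l := by omega
    refine mem_H_of_add_eq_ceil_mul_g₀ (k := 0) (by omega) (hx.trans ?_)
    ring

lemma q_sub_sub_ceil_mul_g₀_add_mem_H (hi : i + (l * q q₀ + k * q₀ + j) + 1 = g₀ q₀)
    (hl : l < q₀ ^ 2) (hj : j + 1 ≤ q₀) (hk : k + 1 ≤ 2 * q₀) :
    (q q₀ - l - 1 - (q q₀ - q₀ * ((k + 1) / 2 + j + l + 1))) * g₀ q₀ + i ∈ H q₀ := by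
  rcases le_or_gt (q q₀) (q₀ * ((k + 1) / 2 + j + l + 1)) with hmax | hmax
  · rw [Nat.sub_eq_zero_of_le hmax, Nat.sub_zero]
    exact q_sub_mul_g₀_add_mem_H hi hl hj hk
  have hle : (k + 1) / 2 + j + l + 1 ≤ q₀ * ((k + 1) / 2 + j + l + 1) :=
    Nat.le_mul_of_pos_left _ (by omega)
  exact mem_H_of_add_eq_ceil_mul_g₀ (lt_two_mul_of_mul_lt_q hmax)
    (mul_g₀_add_eq_mul_g₀ hi (by omega))

end SemigroupH

open SemigroupH in
theorem stmt_6_general (q₀ : ℕ) {i l k j : ℕ} (hlower : q q₀ * (q q₀ - 2) / 2 + 1 ≤ i)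
    (hupper : i ≤ g₀ q₀ - 1) (hdigits : g₀ q₀ - 1 - i = l * q q₀ + k * q₀ + j)
    (hj : j + 1 ≤ q₀) (hk : k + 1 ≤ 2 * q₀) : φ₂ q₀ l k j * g₀ q₀ + i ∈ H q₀ := by
  have hi : i + (l * q q₀ + k * q₀ + j) + 1 = g₀ q₀ := by
    have := g₀_pos q₀
    omega
  have hl : l < q₀ ^ 2 := lt_sq_of_lower_bound hi hlower
  unfold φ₂
  split_ifs with hj_eq
  · exact q_sub_sub_linear_mul_g₀_add_mem_H hi hl (by omega) hk
  · exact q_sub_sub_ceil_mul_g₀_add_mem_H hi hl hj hk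

/-- Lemma `lem:phi2`: if `q(q−2)/2 + 1 ≤ i ≤ g₀ − 1 = q² − q` and
`i′ = g₀ − 1 − i = q² − q − i` is written as `i′ = lq + kq₀ + j` with
`0 ≤ j ≤ q₀−1`, `0 ≤ k ≤ 2q₀−1`, `l ≥ 0`, then `φ₂(i)·g₀ + i` belongs to the
numerical semigroup `H` generated by `g₀, g₁, g₂, g₃, g₄`, the `f_i` and the `h_j`.
Here `max{x − y, 0}` for naturals is truncated subtraction `x - y`, and
`⌈k/2⌉ = (k+1)/2`. -/
theorem stmt_6 (s : ℕ) (hs : 1 ≤ s) (q₀ q g₀ g₁ g₂ g₃ g₄ : ℕ)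
    (hq₀ : q₀ = 2 ^ s) (hq : q = 2 * q₀ ^ 2)
    (hg₀ : g₀ = q ^ 2 - q + 1) (hg₁ : g₁ = q ^ 2 - 2 * q₀ + 1)
    (hg₂ : g₂ = q ^ 2 - q₀ + 1) (hg₃ : g₃ = q ^ 2) (hg₄ : g₄ = q ^ 2 + 1)
    (H : AddSubmonoid ℕ)
    (hH : H = AddSubmonoid.closure
      ({g₀, g₁, g₂, g₃, g₄} ∪
        {x | ∃ i : ℕ, i + 2 ≤ 2 * q₀ ∧ x = (i + 1) * q₀ * g₀ - i * g₄ - 1} ∪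
        {x | ∃ j : ℕ, j + 2 ≤ q₀ ∧ x = (2 * j + 1) * q₀ * g₀ - j * g₄ - q₀})) :
    ∀ i l k j : ℕ, q * (q - 2) / 2 + 1 ≤ i → i ≤ g₀ - 1 →
      g₀ - 1 - i = l * q + k * q₀ + j →
      j + 1 ≤ q₀ → k + 1 ≤ 2 * q₀ →
      (if j = q₀ - 1 then q - l - 1 - (q - q₀ * (k + 2 * l + 1))
       else q - l - 1 - (q - q₀ * ((k + 1) / 2 + j + l + 1))) * g₀ + i ∈ H := by
  subst hq hg₀ hg₁ hg₂ hg₃ hg₄ hH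
  exact fun _ _ _ _ hlower hupper hdigits hj hk =>
    stmt_6_general q₀ hlower hupper hdigits hj hk
end

section
/- Let s ≥ 1 be an integer, q₀ = 2^s and q = 2q₀². Define φ₁ on {0,…,q(q−2)/2} by: write i = lq + kq₀ + j with 0 ≤ j ≤ q₀−1, 0 ≤ k ≤ 2q₀−1, l ≥ 0, and set φ₁(i) = l if j = 0 and k = 0; φ₁(i) = l + 1 + max{q − q₀(k+2l+2), 0} if j = 0 and k ≠ 0; φ₁(i) = l + 1 + max{q − q₀(⌈k/2⌉+j+l+1), 0} if j ≠ 0. Define φ₂ on {q(q−2)/2 + 1,…,q²−q} by: write q² − q − i = lq + kq₀ + j with 0 ≤ j ≤ q₀−1, 0 ≤ k ≤ 2q₀−1, l ≥ 0, and set φ₂(i) = q − l − 1 − max{q − q₀(k+2l+1), 0} if j = q₀−1; φ₂(i) = q − l − 1 − max{q − q₀(⌈k/2⌉+j+l+1), 0} if j ≠ q₀−1. Then for every integer i with 0 ≤ i ≤ q(q−2)/2, one has φ₁(i) + φ₂((q−1)² − i) = q − 1. -/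
/-!
Since `q² - q - ((q - 1)² - i) = i + (q - 1)`, the digits that determine `φ₂((q - 1)² - i)` are
those of `i + q - 1`. Write `q = mq₀` and `i = lq + kq₀ + j` with `j < q₀` and `k < m`. Adding `q`
raises `l` by one, and subtracting `1` then lowers `j`, borrowing from `k` when `j = 0`, and from
`l` when `j = k = 0`. In the first two cases the truncated differences in `φ₁` and `φ₂` are the
same number and cancel; in the third `φ₁` has none and that of `φ₂` vanishes.
-/

/-- The value `φ₁(lq + kq₀ + j)` in terms of the digits `l`, `k`, `j`. As in the theorem,
`max{x - y, 0}` is truncated subtraction and `⌈k/2⌉` is `(k + 1) / 2`. -/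
def lowerValue (q₀ q l k j : ℕ) : ℕ :=
  if j = 0 ∧ k = 0 then l
  else if j = 0 then l + 1 + (q - q₀ * (k + 2 * l + 2))
  else l + 1 + (q - q₀ * ((k + 1) / 2 + j + l + 1))

/-- The value `φ₂(q² - q - (lq + kq₀ + j))` in terms of the digits `l`, `k`, `j`, with the same
conventions as `lowerValue`. -/
def upperValue (q₀ q l k j : ℕ) : ℕ :=
  if j = q₀ - 1 then q - l - 1 - (q - q₀ * (k + 2 * l + 1))
  else q - l - 1 - (q - q₀ * ((k + 1) / 2 + j + l + 1))

theorem add_sub_mul_le {a b c q : ℕ} (ha : 0 < a) (hbc : b ≤ c) (hbq : b ≤ q) :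
    b + (q - a * c) ≤ q := by
  have hc : c ≤ a * c := Nat.le_mul_of_pos_left c ha
  omega

section Digits

variable {q₀ m q l k j : ℕ}

theorem exists_eq_mul_add_mul_add (hq₀ : 0 < q₀) (hm : 0 < m) (n : ℕ) :
    ∃ l k j, n = l * (m * q₀) + k * q₀ + j ∧ j < q₀ ∧ k < m := by
  refine ⟨n / q₀ / m, n / q₀ % m, n % q₀, ?_, Nat.mod_lt _ hq₀, Nat.mod_lt _ hm⟩
  rw [← mul_assoc, ← add_mul, Nat.div_add_mod', Nat.div_add_mod']

theorem lowerValue_zero_zero_add_upperValue (hl : l < m * q₀) :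
    lowerValue q₀ (m * q₀) l 0 0 + upperValue q₀ (m * q₀) l (m - 1) (q₀ - 1) = m * q₀ - 1 := by
  have hm : 0 < m := Nat.pos_of_mul_pos_right (b := q₀) (by omega)
  have truncated_eq_zero : m * q₀ - q₀ * (m - 1 + 2 * l + 1) = 0 := by
    rw [mul_comm m]
    exact Nat.sub_eq_zero_of_le (Nat.mul_le_mul_left q₀ (by omega))
  simp only [lowerValue, upperValue, and_self, if_true, truncated_eq_zero]
  omega

theorem lowerValue_succ_zero_add_upperValue (hq₀ : 0 < q₀) (hl : l + 2 ≤ q) :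
    lowerValue q₀ q l (k + 1) 0 + upperValue q₀ q (l + 1) k (q₀ - 1) = q - 1 := by
  have bound : l + 2 + (q - q₀ * (k + 1 + 2 * l + 2)) ≤ q :=
    add_sub_mul_le hq₀ (by omega) hl
  have same_factor : k + 2 * (l + 1) + 1 = k + 1 + 2 * l + 2 := by ring
  simp only [lowerValue, upperValue, k.succ_ne_zero, and_false, if_true, if_false, same_factor]
  omega

theorem lowerValue_succ_add_upperValue (hj : j + 1 < q₀) (hl : l + 2 ≤ q) :
    lowerValue q₀ q l k (j + 1) + upperValue q₀ q (l + 1) k j = q - 1 := by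
  have bound : l + 2 + (q - q₀ * ((k + 1) / 2 + (j + 1) + l + 1)) ≤ q :=
    add_sub_mul_le (by omega) (by omega) hl
  have same_factor : (k + 1) / 2 + j + (l + 1) + 1 = (k + 1) / 2 + (j + 1) + l + 1 := by ring
  have not_last : j ≠ q₀ - 1 := by omega
  simp only [lowerValue, upperValue, j.succ_ne_zero, not_last, false_and, if_false, same_factor]
  omega

theorem exists_digits_add_pred_lowerValue_add_upperValue_eq
    (hl : l + 2 ≤ m * q₀) (hj : j < q₀) (hk : k < m) :
    ∃ l' k' j', l * (m * q₀) + k * q₀ + j + (m * q₀ - 1) = l' * (m * q₀) + k' * q₀ + j' ∧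
      j' < q₀ ∧ k' < m ∧
      lowerValue q₀ (m * q₀) l k j + upperValue q₀ (m * q₀) l' k' j' = m * q₀ - 1 := by
  have hq₀ : 0 < q₀ := by omega
  have hm : 0 < m := by omega
  rcases j with _ | j
  · rcases k with _ | k
    · refine ⟨l, m - 1, q₀ - 1, ?_, by omega, by omega,
        lowerValue_zero_zero_add_upperValue (by omega)⟩
      have hq₀_le : q₀ ≤ m * q₀ := Nat.le_mul_of_pos_left q₀ hm
      rw [Nat.sub_one_mul]
      omega
    · refine ⟨l + 1, k, q₀ - 1, ?_, by omega, by omega,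
        lowerValue_succ_zero_add_upperValue hq₀ hl⟩
      rw [Nat.add_one_mul, Nat.add_one_mul]
      omega
  · refine ⟨l + 1, k, j, ?_, by omega, hk, lowerValue_succ_add_upperValue hj hl⟩
    rw [Nat.add_one_mul]
    omega

end Digits

section Reflection

variable {q i : ℕ}

theorem half_lt_sq_pred_sub (hq : 2 ≤ q) (hi : i ≤ q * (q - 2) / 2) :
    q * (q - 2) / 2 < (q - 1) ^ 2 - i := by
  have sq_pred : (q - 1) ^ 2 = q * (q - 2) + 1 := by
    obtain ⟨r, rfl⟩ := Nat.exists_eq_add_of_le' hq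
    simp only [Nat.add_sub_cancel, Nat.reduceSubDiff]
    ring
  omega

theorem sq_sub_self_eq_sq_pred_add (q : ℕ) : q ^ 2 - q = (q - 1) ^ 2 + (q - 1) := by
  rw [sq, sq, ← Nat.mul_sub_one, ← Nat.mul_add_one]
  cases q <;> simp [mul_comm]

theorem add_two_le_of_mul_le_half {l : ℕ} (hq : 2 ≤ q) (hl : l * q ≤ q * (q - 2) / 2) :
    l + 2 ≤ q := by
  have mul_le : l * q ≤ (q - 2) * q :=
    hl.trans ((Nat.div_le_self _ 2).trans_eq (mul_comm _ _))
  have le_sub : l ≤ q - 2 := Nat.le_of_mul_le_mul_right mul_le (by omega)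
  omega

end Reflection

theorem stmt_7_general (q₀ m q : ℕ) (hq : q = m * q₀) (hq_two : 2 ≤ q) (φ₁ φ₂ : ℕ → ℕ)
    (hφ₁ : ∀ i l k j : ℕ, i ≤ q * (q - 2) / 2 → i = l * q + k * q₀ + j →
      j < q₀ → k < m → φ₁ i = lowerValue q₀ q l k j)
    (hφ₂ : ∀ i l k j : ℕ, q * (q - 2) / 2 < i → i ≤ q ^ 2 - q →
      q ^ 2 - q - i = l * q + k * q₀ + j →
      j < q₀ → k < m → φ₂ i = upperValue q₀ q l k j)
    (i : ℕ) (hi : i ≤ q * (q - 2) / 2) : φ₁ i + φ₂ ((q - 1) ^ 2 - i) = q - 1 := by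
  subst hq
  have hmq₀ : 0 < m * q₀ := by omega
  obtain ⟨l, k, j, hi_digits, hj, hk⟩ :=
    exists_eq_mul_add_mul_add (Nat.pos_of_mul_pos_left hmq₀) (Nat.pos_of_mul_pos_right hmq₀) i
  have hl : l + 2 ≤ m * q₀ := add_two_le_of_mul_le_half hq_two (by omega)
  obtain ⟨l', k', j', digits_add_pred, hj', hk', values_add⟩ :=
    exists_digits_add_pred_lowerValue_add_upperValue_eq hl hj hk
  have above_half := half_lt_sq_pred_sub hq_two hi
  have top := sq_sub_self_eq_sq_pred_add (m * q₀)
  rw [hφ₁ i l k j hi hi_digits hj hk,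
    hφ₂ _ l' k' j' above_half (by omega) (by omega) hj' hk', values_add]

/-- For every `0 ≤ i ≤ q(q−2)/2` one has `φ₁(i) + φ₂((q−1)² − i) = q − 1`.
The functions `φ₁` and `φ₂` are characterized by their values on the unique
decomposition `n = lq + kq₀ + j` with `0 ≤ j ≤ q₀−1`, `0 ≤ k ≤ 2q₀−1`, `l ≥ 0`.
Here `max{x − y, 0}` for naturals is truncated subtraction `x - y`, and
`⌈k/2⌉ = (k+1)/2`. -/
theorem stmt_7 (s : ℕ) (hs : 1 ≤ s) (q₀ q : ℕ)
    (hq₀ : q₀ = 2 ^ s) (hq : q = 2 * q₀ ^ 2)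
    (φ₁ φ₂ : ℕ → ℕ)
    (hφ₁ : ∀ i l k j : ℕ, i ≤ q * (q - 2) / 2 → i = l * q + k * q₀ + j →
      j + 1 ≤ q₀ → k + 1 ≤ 2 * q₀ →
      φ₁ i = if j = 0 ∧ k = 0 then l
             else if j = 0 then l + 1 + (q - q₀ * (k + 2 * l + 2))
             else l + 1 + (q - q₀ * ((k + 1) / 2 + j + l + 1)))
    (hφ₂ : ∀ i l k j : ℕ, q * (q - 2) / 2 + 1 ≤ i → i ≤ q ^ 2 - q →
      q ^ 2 - q - i = l * q + k * q₀ + j →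
      j + 1 ≤ q₀ → k + 1 ≤ 2 * q₀ →
      φ₂ i = if j = q₀ - 1 then q - l - 1 - (q - q₀ * (k + 2 * l + 1))
             else q - l - 1 - (q - q₀ * ((k + 1) / 2 + j + l + 1))) :
    ∀ i : ℕ, i ≤ q * (q - 2) / 2 → φ₁ i + φ₂ ((q - 1) ^ 2 - i) = q - 1 := by
  have hq_two : 2 ≤ q := by
    have : 0 < q₀ ^ 2 := by rw [hq₀]; positivity
    omega
  exact stmt_7_general q₀ (2 * q₀) q (by rw [hq]; ring) hq_two φ₁ φ₂ hφ₁ hφ₂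
end

section
/- Let s ≥ 1 be an integer, q₀ = 2^s and q = 2q₀². Define φ₂ on {(q−1)²+1,…,q²−q} by: write q² − q − i = kq₀ + j with 0 ≤ j ≤ q₀−1 and 0 ≤ k ≤ 2q₀−1 (note q² − q − i ≤ q−2 here), and set φ₂(i) = q₀(k+1) − 1 if j = q₀−1, and φ₂(i) = q₀(⌈k/2⌉ + j + 1) − 1 if j ≠ q₀−1. Then the sum of φ₂(i) over all integers i with (q−1)² + 1 ≤ i ≤ q² − q equals q²/2 − 3q/2 + 1. -/
/-!
Shift every value of `φ₂` by one and let the difference `q² - q - i` run over all of `{0, …, q - 1}`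
instead of `{0, …, q - 2}`: the base-`q₀` digits `(k, j)` then fill the whole rectangle
`2q₀ × q₀`. The sum over it is `2q₀⁴ + q₀²`, because `⌈0/2⌉ + ⋯ + ⌈(2q₀ - 1)/2⌉ = q₀²`. The added
corner `(2q₀ - 1, q₀ - 1)` contributes `q` and the shift contributes `q - 1`, which leaves
`2q₀⁴ + q₀² - (2q - 1) = q²/2 - 3q/2 + 1`.
-/

open Finset

theorem mul_add_div_mod_eq {m j : ℕ} (k : ℕ) (hj : j < m) :
    (k * m + j) / m = k ∧ (k * m + j) % m = j :=
  (Nat.div_mod_unique (Nat.zero_lt_of_lt hj)).2 ⟨by ring, hj⟩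

theorem sum_range_mul_div_mod {M : Type*} [AddCommMonoid M] (f : ℕ → ℕ → M) (K m : ℕ) :
    ∑ n ∈ range (K * m), f (n / m) (n % m) = ∑ k ∈ range K, ∑ j ∈ range m, f k j := by
  induction K with
  | zero => simp
  | succ K ih =>
    rw [Nat.succ_mul, sum_range_add, ih, sum_range_succ]
    congr 1
    refine sum_congr rfl fun j hj => ?_
    obtain ⟨hdiv, hmod⟩ := mul_add_div_mod_eq K (mem_range.1 hj)
    rw [hdiv, hmod]

theorem sum_Icc_tsub {M : Type*} [AddCommMonoid M] (f : ℕ → M) (a r : ℕ) :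
    ∑ i ∈ Icc (a + 1) (a + r), f (a + r - i) = ∑ n ∈ range r, f n := by
  rw [← Ico_add_one_right_eq_Icc, sum_Ico_reflect f (a + 1) le_rfl, Nat.sub_self,
    show a + r + 1 - (a + 1) = r by lia, Nat.Ico_zero_eq_range]

theorem sum_Icc_add_eq_sum_range_of_add_one_eq {φ f : ℕ → ℕ} {a r : ℕ}
    (h : ∀ i ∈ Icc (a + 1) (a + r), φ i + 1 = f (a + r - i)) :
    ∑ i ∈ Icc (a + 1) (a + r), φ i + r = ∑ n ∈ range r, f n := by
  rw [← sum_Icc_tsub f a, ← sum_congr rfl h, sum_add_distrib, sum_const, Nat.card_Icc,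
    smul_eq_mul, mul_one]
  lia

theorem sum_range_two_mul_ceil_half (K : ℕ) : ∑ k ∈ range (2 * K), (k + 1) / 2 = K ^ 2 := by
  induction K with
  | zero => simp
  | succ K ih =>
    rw [show 2 * (K + 1) = 2 * K + 1 + 1 by ring, sum_range_succ, sum_range_succ, ih,
      show (2 * K + 1) / 2 = K by lia, show (2 * K + 1 + 1) / 2 = K + 1 by lia]
    ring

theorem sub_one_sq_add_sub_one (q : ℕ) : (q - 1) ^ 2 + (q - 1) = q ^ 2 - q := by
  rw [sq, sq, ← Nat.succ_mul, ← Nat.sub_one_mul]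
  cases q <;> simp [mul_comm]

/-- The value `φ₂(i) + 1` as a function of the base-`m` digits `k`, `j` of `q² - q - i`, where
`m = q₀`. The shift by one keeps truncated subtraction out of the sums. -/
def digitWeight (m k j : ℕ) : ℕ :=
  if j = m - 1 then m * (k + 1) else m * ((k + 1) / 2 + j + 1)

theorem digitWeight_pos {m : ℕ} (hm : 0 < m) (k j : ℕ) : 0 < digitWeight m k j := by
  unfold digitWeight
  split_ifs <;> positivity

theorem sum_digitWeight_row (t k : ℕ) :
    ∑ j ∈ range (t + 1), digitWeight (t + 1) k j =
      (t + 1) * (t * ((k + 1) / 2) + ∑ j ∈ range (t + 1), j + (k + 1)) := by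
  have weight_of_lt : ∀ j ∈ range t,
      digitWeight (t + 1) k j = (t + 1) * ((k + 1) / 2 + (j + 1)) := fun j hj =>
    if_neg (mem_range.1 hj).ne
  have weight_last : digitWeight (t + 1) k t = (t + 1) * (k + 1) := if_pos rfl
  rw [sum_range_succ, sum_congr rfl weight_of_lt, weight_last, ← mul_sum, sum_add_distrib,
    sum_const, card_range, smul_eq_mul, sum_range_succ' (fun j => j) t, add_zero, ← mul_add]

theorem sum_digitWeight_rectangle (m : ℕ) :
    ∑ k ∈ range (2 * m), ∑ j ∈ range m, digitWeight m k j = 2 * m ^ 4 + m ^ 2 := by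
  obtain _ | t := m
  · simp
  have gauss_cols : (∑ j ∈ range (t + 1), j) * 2 = (t + 1) * t := sum_range_id_mul_two (t + 1)
  have gauss_rows : ∑ k ∈ range (2 * (t + 1)), (k + 1) = (t + 1) * (2 * t + 3) := by
    have gauss := sum_range_id_mul_two (2 * (t + 1) + 1)
    rw [sum_range_succ', Nat.add_sub_cancel] at gauss
    linarith
  calc ∑ k ∈ range (2 * (t + 1)), ∑ j ∈ range (t + 1), digitWeight (t + 1) k j
    _ = (t + 1) * (t * (t + 1) ^ 2 + 2 * (t + 1) * ∑ j ∈ range (t + 1), j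
          + (t + 1) * (2 * t + 3)) := by
      simp only [sum_digitWeight_row, ← mul_sum, sum_add_distrib, sum_const, card_range,
        smul_eq_mul, sum_range_two_mul_ceil_half, ← gauss_rows, mul_one]
    _ = (t + 1) * (t * (t + 1) ^ 2 + (t + 1) * ((t + 1) * t) + (t + 1) * (2 * t + 3)) := by
      rw [← gauss_cols]; ring
    _ = 2 * (t + 1) ^ 4 + (t + 1) ^ 2 := by ring

theorem sum_digitWeight_range_pred {m : ℕ} (hm : 0 < m) :
    ∑ n ∈ range (2 * m ^ 2 - 1), digitWeight m (n / m) (n % m) + 2 * m ^ 2 =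
      2 * m ^ 4 + m ^ 2 := by
  have corner_digits : 2 * m ^ 2 - 1 = (2 * m - 1) * m + (m - 1) := by
    obtain ⟨t, rfl⟩ := Nat.exists_eq_add_one.2 hm
    rw [Nat.add_sub_cancel, show 2 * (t + 1) - 1 = 2 * t + 1 by lia]
    exact Nat.sub_eq_of_eq_add (by ring)
  have corner : digitWeight m ((2 * m ^ 2 - 1) / m) ((2 * m ^ 2 - 1) % m) = 2 * m ^ 2 := by
    obtain ⟨hdiv, hmod⟩ := mul_add_div_mod_eq (2 * m - 1) (Nat.sub_one_lt hm.ne')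
    rw [corner_digits, hdiv, hmod, digitWeight, if_pos rfl, Nat.sub_add_cancel (by lia)]
    ring
  have hcard : 2 * m ^ 2 - 1 + 1 = 2 * m * m := by
    rw [Nat.sub_add_cancel (show 0 < 2 * m ^ 2 by positivity)]
    ring
  rw [← sum_digitWeight_rectangle, ← sum_range_mul_div_mod, ← hcard, sum_range_succ, corner]

theorem stmt_8_general (q₀ q : ℕ) (hq₀ : 2 ≤ q₀) (hq : q = 2 * q₀ ^ 2)
    (φ₂ : ℕ → ℕ)
    (hφ₂ : ∀ i k j : ℕ, (q - 1) ^ 2 + 1 ≤ i → i ≤ q ^ 2 - q →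
      q ^ 2 - q - i = k * q₀ + j →
      j + 1 ≤ q₀ → k + 1 ≤ 2 * q₀ →
      φ₂ i = if j = q₀ - 1 then q₀ * (k + 1) - 1
             else q₀ * ((k + 1) / 2 + j + 1) - 1) :
    ∑ i ∈ Icc ((q - 1) ^ 2 + 1) (q ^ 2 - q), φ₂ i = q ^ 2 / 2 - 3 * q / 2 + 1 := by
  have hpos : 0 < q₀ := by lia
  rw [← sub_one_sq_add_sub_one q] at hφ₂ ⊢
  set a := (q - 1) ^ 2
  have value_add_one : ∀ i ∈ Icc (a + 1) (a + (q - 1)), φ₂ i + 1 =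
      digitWeight q₀ ((a + (q - 1) - i) / q₀) ((a + (q - 1) - i) % q₀) := by
    intro i hi
    obtain ⟨lower, upper⟩ := mem_Icc.1 hi
    have hk : (a + (q - 1) - i) / q₀ < 2 * q₀ := Nat.div_lt_of_lt_mul (by lia)
    rw [hφ₂ i _ _ lower upper (Nat.div_add_mod' _ q₀).symm (Nat.mod_lt _ hpos) hk,
      ← apply_ite (· - 1)]
    exact Nat.sub_add_cancel (digitWeight_pos hpos _ _)
  have sum_add_card := sum_Icc_add_eq_sum_range_of_add_one_eq
    (f := fun n => digitWeight q₀ (n / q₀) (n % q₀)) value_add_one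
  have total := sum_digitWeight_range_pred hpos
  rw [← hq, ← sum_add_card] at total
  have half_sq : q ^ 2 / 2 = 2 * q₀ ^ 4 := by
    rw [hq, show (2 * q₀ ^ 2) ^ 2 = 2 * (2 * q₀ ^ 4) by ring, Nat.mul_div_cancel_left _ two_pos]
  have four_le_sq : 2 ^ 2 ≤ q₀ ^ 2 := Nat.pow_le_pow_left hq₀ 2
  have le_half_sq : 3 * q₀ ^ 2 ≤ 2 * q₀ ^ 4 := by nlinarith
  lia

/-- The sum of `φ₂(i)` over `(q−1)² + 1 ≤ i ≤ q² − q` equals `q²/2 − 3q/2 + 1`.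
For such `i`, the difference `q² − q − i` lies in `{0,…,q−2}` and is written
uniquely as `kq₀ + j` with `0 ≤ j ≤ q₀−1`, `0 ≤ k ≤ 2q₀−1`, and
`φ₂(i) = q₀(k+1) − 1` if `j = q₀ − 1`, `φ₂(i) = q₀(⌈k/2⌉ + j + 1) − 1` otherwise,
with `⌈k/2⌉ = (k+1)/2`. -/
theorem stmt_8 (s : ℕ) (hs : 1 ≤ s) (q₀ q : ℕ)
    (hq₀ : q₀ = 2 ^ s) (hq : q = 2 * q₀ ^ 2)
    (φ₂ : ℕ → ℕ)
    (hφ₂ : ∀ i k j : ℕ, (q - 1) ^ 2 + 1 ≤ i → i ≤ q ^ 2 - q →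
      q ^ 2 - q - i = k * q₀ + j →
      j + 1 ≤ q₀ → k + 1 ≤ 2 * q₀ →
      φ₂ i = if j = q₀ - 1 then q₀ * (k + 1) - 1
             else q₀ * ((k + 1) / 2 + j + 1) - 1) :
    ∑ i ∈ Finset.Icc ((q - 1) ^ 2 + 1) (q ^ 2 - q), φ₂ i = q ^ 2 / 2 - 3 * q / 2 + 1 :=
  stmt_8_general q₀ q (hq₀ ▸ Nat.pow_le_pow_right two_pos hs) hq φ₂ hφ₂
end

section
/- Let s ≥ 1 be an integer, q₀ = 2^s and q = 2q₀². Let H be the numerical semigroup generated by the 3q₀+3 elements g₀ = q²−q+1, g₁ = q²−2q₀+1, g₂ = q²−q₀+1, g₃ = q², g₄ = q²+1, f_i = (i+1)q₀g₀ − i·g₄ − 1 for i = 0,…,2q₀−2, and h_j = (2j+1)q₀g₀ − j·g₄ − q₀ for j = 0,…,q₀−2. Then H has exactly q(q−1)²/2 gaps, i.e. the complement ℕ \ H has cardinality q(q−1)²/2. -/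
/-!
Put `m = q² + 1 = g₄`. Every generator is `a * m - b` for a pair `(a, b)` of nonnegative integers,
so `H` is the image of a monoid `D` of such pairs, in which `(1, 0)` represents `g₄`. The claim is
that `H` is symmetric with Frobenius number `F = (q - 2) * m + 1`: exactly one of `n`, `F - n` lies
in `H`, for every integer `n`. The gaps are then half of the `F + 1 = q * (q - 1) ^ 2` integers
in `[0, F]`.

* At least one: each residue class modulo `m` has a representative `-b` with `0 ≤ b ≤ q²`, and for
  each such `b` the pair `(q, q²)` is a sum of two elements of `D`, one of them with second
  coordinate `b`.
* Not both: otherwise `F ∈ H`, that is, `(q - 2 + k, k * m - 1) ∈ D` for some `k`. Here `k ≤ 0`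
  makes the second coordinate negative, `k ≥ 2` makes the slope of the pair larger than the
  generators of `D` allow, and for `k = 1` one counts the generators in a decomposition
  of `(q - 1, q²)`.
-/

section Symmetric

/-- A submonoid `H` of `ℤ` is symmetric about `F` if the reflection `n ↦ F - n` exchanges `H` and
its complement. For (the image in `ℤ` of) a numerical semigroup this is the usual notion of a
symmetric semigroup with Frobenius number `F`. -/
def IsSymmetricAbout (H : AddSubmonoid ℤ) (F : ℤ) : Prop :=
  ∀ n : ℤ, n ∈ H ↔ F - n ∉ H

theorem isSymmetricAbout_of_notMem {H : AddSubmonoid ℤ} {F : ℤ} (hF : F ∉ H)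
    (h : ∀ n, n ∈ H ∨ F - n ∈ H) : IsSymmetricAbout H F := fun n =>
  ⟨fun hn hn' => hF (by simpa using H.add_mem hn hn'), (h n).resolve_right⟩

theorem natCast_mem_map_castAddMonoidHom {H : AddSubmonoid ℕ} {n : ℕ} :
    (n : ℤ) ∈ H.map (Nat.castAddMonoidHom ℤ) ↔ n ∈ H :=
  AddSubmonoid.mem_map_iff_mem (f := Nat.castAddMonoidHom ℤ) Nat.cast_injective

theorem two_mul_ncard_gaps_of_isSymmetricAbout {H : AddSubmonoid ℕ} {F : ℕ}
    (h : IsSymmetricAbout (H.map (Nat.castAddMonoidHom ℤ)) F) :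
    2 * {n : ℕ | n ∉ H}.ncard = F + 1 := by
  classical
  have reflect : ∀ n ≤ F, n ∈ H ↔ F - n ∉ H := fun n hn => by
    simpa only [← Nat.cast_sub hn, natCast_mem_map_castAddMonoidHom] using h n
  have gap_le : ∀ n ∉ H, n ≤ F := fun n hn => by
    have hmem : (F : ℤ) - n ∈ H.map (Nat.castAddMonoidHom ℤ) := by
      by_contra hcon
      exact hn (natCast_mem_map_castAddMonoidHom.1 ((h n).2 hcon))
    obtain ⟨m, -, hm⟩ := AddSubmonoid.mem_map.1 hmem
    rw [Nat.coe_castAddMonoidHom] at hm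
    omega
  have gaps_eq : {n : ℕ | n ∉ H} = ((Finset.range (F + 1)).filter (· ∉ H) : Finset ℕ) := by
    ext n
    simpa [Nat.lt_succ_iff] using gap_le n
  have card_eq : ((Finset.range (F + 1)).filter (· ∈ H)).card =
      ((Finset.range (F + 1)).filter (· ∉ H)).card := by
    refine Finset.card_nbij' (F - ·) (F - ·) ?_ ?_ ?_ ?_ <;> intro n hn <;>
      simp only [Finset.coe_filter, Finset.mem_range, Nat.lt_succ_iff, Set.mem_ofPred_eq] at hn ⊢
    · exact ⟨Nat.sub_le F n, by rw [reflect _ (Nat.sub_le F n), Nat.sub_sub_self hn.1]; simp [hn.2]⟩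
    · exact ⟨Nat.sub_le F n, by rw [reflect _ (Nat.sub_le F n), Nat.sub_sub_self hn.1]; exact hn.2⟩
    · exact Nat.sub_sub_self hn.1
    · exact Nat.sub_sub_self hn.1
  rw [gaps_eq, Set.ncard_coe_finset]
  have card_add := Finset.card_filter_add_card_filter_not (s := Finset.range (F + 1)) (· ∈ H)
  rw [Finset.card_range] at card_add
  omega

end Symmetric

section Pairs

/-- The integer `a * m - b` represented by the pair `(a, b)`. -/
def pairValue (m : ℤ) : ℤ × ℤ →+ ℤ where
  toFun x := x.1 * m - x.2
  map_zero' := by simp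
  map_add' x y := by simp only [Prod.fst_add, Prod.snd_add]; ring

@[simp]
theorem pairValue_apply (m a b : ℤ) : pairValue m (a, b) = a * m - b := rfl

/-- `w` is the sum of two elements of `D`, the first of which has second coordinate `b`. Splitting
`(q, q ^ 2)` at `b` represents one of `n`, `F - n` for every `n ≡ -b` modulo `q ^ 2 + 1`. -/
def SplitsAt (D : AddSubmonoid (ℤ × ℤ)) (w : ℤ × ℤ) (b : ℤ) : Prop :=
  ∃ a, (a, b) ∈ D ∧ w - (a, b) ∈ D

variable {D : AddSubmonoid (ℤ × ℤ)}

theorem mem_of_fst_le (hD : ((1, 0) : ℤ × ℤ) ∈ D) {a a' b : ℤ} (h : (a, b) ∈ D) (ha : a ≤ a') :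
    (a', b) ∈ D := by
  obtain ⟨k, rfl⟩ := Int.le.dest ha
  simpa using D.add_mem h (D.nsmul_mem hD k)

theorem mem_map_pairValue_or_sub_mem (hD : ((1, 0) : ℤ × ℤ) ∈ D) {m r : ℤ} (hm : 0 < m)
    (hsplit : ∀ b, 0 ≤ b → b < m → SplitsAt D (r + 2, m - 1) b) (n : ℤ) :
    n ∈ D.map (pairValue m) ∨ r * m + 1 - n ∈ D.map (pairValue m) := by
  have hn : n = -(-n / m) * m - -n % m := by linarith [Int.mul_ediv_add_emod (-n) m]
  generalize -(-n / m) = c at hn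
  obtain ⟨a, hab, hab'⟩ := hsplit (-n % m) (Int.emod_nonneg _ hm.ne') (Int.emod_lt_of_pos _ hm)
  generalize -n % m = b at hn hab hab'
  subst hn
  rw [Prod.mk_sub_mk] at hab'
  rcases le_or_gt a c with hac | hca
  · exact .inl ⟨(c, b), mem_of_fst_le hD hab hac, rfl⟩
  · refine .inr ⟨(r + 1 - c, m - 1 - b), mem_of_fst_le hD hab' (by linarith), ?_⟩
    rw [pairValue_apply]
    ring

theorem isSymmetricAbout_map_pairValue (hD : ((1, 0) : ℤ × ℤ) ∈ D) {m r : ℤ} (hm : 0 < m)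
    (hsplit : ∀ b, 0 ≤ b → b < m → SplitsAt D (r + 2, m - 1) b)
    (hnot : ∀ k, (r + k, k * m - 1) ∉ D) :
    IsSymmetricAbout (D.map (pairValue m)) (r * m + 1) := by
  refine isSymmetricAbout_of_notMem ?_ (mem_map_pairValue_or_sub_mem hD hm hsplit)
  rintro ⟨⟨a, b⟩, hab, hval⟩
  rw [pairValue_apply] at hval
  have hpair : (r + (a - r), (a - r) * m - 1) = (a, b) := Prod.ext (by ring) (by linarith)
  exact hnot (a - r) (hpair ▸ hab)

end Pairs

section PairMonoid

/-- The pairs `(a, b)` for which `a * (q ^ 2 + 1) - b` runs through the generators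
`g₀, g₁, g₂, g₃, g₄`, `f_i` and `h_j`, in this order. -/
def pairGenerators (p q : ℤ) : Set (ℤ × ℤ) :=
  {(1, q), (1, 2 * p), (1, p), (1, 1), (1, 0)} ∪
    {x | ∃ i : ℤ, 0 ≤ i ∧ i + 2 ≤ 2 * p ∧ x = ((i + 1) * p - i, (i + 1) * p * q + 1)} ∪
    {x | ∃ j : ℤ, 0 ≤ j ∧ j + 2 ≤ p ∧ x = ((2 * j + 1) * p - j, (2 * j + 1) * p * q + p)}

/-- The monoid of pairs whose values at `q ^ 2 + 1` form the semigroup `H`. -/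
def pairMonoid (p q : ℤ) : AddSubmonoid (ℤ × ℤ) :=
  AddSubmonoid.closure (pairGenerators p q)

variable {p q : ℤ}

theorem one_zero_mem_pairMonoid : (1, 0) ∈ pairMonoid p q :=
  AddSubmonoid.subset_closure (by simp [pairGenerators])

theorem f_mem_pairMonoid {i : ℤ} (hi : 0 ≤ i) (hip : i + 2 ≤ 2 * p) :
    ((i + 1) * p - i, (i + 1) * p * q + 1) ∈ pairMonoid p q :=
  AddSubmonoid.subset_closure (.inl (.inr ⟨i, hi, hip, rfl⟩))

theorem h_mem_pairMonoid {j : ℤ} (hj : 0 ≤ j) (hjp : j + 2 ≤ p) :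
    ((2 * j + 1) * p - j, (2 * j + 1) * p * q + p) ∈ pairMonoid p q :=
  AddSubmonoid.subset_closure (.inr ⟨j, hj, hjp, rfl⟩)

theorem g_combination_mem_pairMonoid {c d e f : ℤ} (hc : 0 ≤ c) (hd : 0 ≤ d) (he : 0 ≤ e)
    (hf : 0 ≤ f) : (c + d + e + f, c * q + d * (2 * p) + e * p + f) ∈ pairMonoid p q := by
  have smul_mem : ∀ k : ℤ, 0 ≤ k → ∀ b, (1, b) ∈ pairGenerators p q →
      (k, k * b) ∈ pairMonoid p q := fun k hk b hb => by
    lift k to ℕ using hk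
    simpa using (pairMonoid p q).nsmul_mem (AddSubmonoid.subset_closure hb) k
  simpa using add_mem (add_mem (add_mem (smul_mem c hc q (by simp [pairGenerators]))
    (smul_mem d hd (2 * p) (by simp [pairGenerators])))
    (smul_mem e he p (by simp [pairGenerators]))) (smul_mem f hf 1 (by simp [pairGenerators]))

-- A single `f_i` with `i = C - 1` saves `C` in the first coordinate.
theorem f_combination_mem_pairMonoid {C c d e f : ℤ} (hC : 0 ≤ C) (hCp : C < 2 * p)
    (hc : 0 ≤ c) (hd : 0 ≤ d) (he : 0 ≤ e) (hf : 0 ≤ f) :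
    (C * p + c + d + e + f + 1 - C, (C * p + c) * q + d * (2 * p) + e * p + f + 1) ∈
      pairMonoid p q := by
  rcases hC.eq_or_lt with rfl | hCpos
  · convert g_combination_mem_pairMonoid (p := p) (q := q) hc hd he (add_nonneg hf zero_le_one)
      using 2 <;> ring
  · convert add_mem (f_mem_pairMonoid (p := p) (q := q) (i := C - 1) (by lia) (by lia))
      (g_combination_mem_pairMonoid hc hd he hf) using 1
    ext <;> simp only [Prod.fst_add, Prod.snd_add] <;> ring

-- The saving `K` comes from a single `h_j` with `j = K - 1`; there is none for `K = p`, where the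
-- last `f_i` takes over.
theorem h_combination_mem_pairMonoid {C c d K : ℤ} (hp : 0 ≤ p) (hC : 0 ≤ C)
    (hCp : C < 2 * p) (hc : 0 ≤ c) (hd : 0 ≤ d) (hK : 0 ≤ K) (hKC : 2 * K ≤ C + 1) :
    (C * p + c + d + 1 - K, (C * p + c) * q + d * (2 * p) + p) ∈ pairMonoid p q := by
  rcases hK.eq_or_lt with rfl | hKpos
  · convert g_combination_mem_pairMonoid (p := p) (q := q) (c := C * p + c) (by positivity) hd
      zero_le_one le_rfl using 2 <;> ring
  rcases le_or_gt (K + 1) p with hKp | hpK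
  · have hrest : 0 ≤ (C + 1 - 2 * K) * p + c := add_nonneg (mul_nonneg (by lia) hp) hc
    convert add_mem (h_mem_pairMonoid (p := p) (q := q) (j := K - 1) (by lia) (by lia))
      (g_combination_mem_pairMonoid hrest hd le_rfl le_rfl) using 1
    ext <;> simp only [Prod.fst_add, Prod.snd_add] <;> ring
  · obtain ⟨rfl, rfl⟩ : K = p ∧ C = 2 * p - 1 := by lia
    convert f_combination_mem_pairMonoid (p := K) (q := q) hC hCp hc hd le_rfl
      (f := K - 1) (by lia) using 2 <;> ring

-- The saving `K` comes from `h_j + h_0` with `j = K - 1`.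
theorem two_h_combination_mem_pairMonoid {C c d K : ℤ} (hp : 0 ≤ p) (hCp : C < 2 * p)
    (hc : 0 ≤ c) (hd : 0 ≤ d) (hK : 0 ≤ K) (hKC : 2 * K ≤ C) :
    (C * p + c + d + 1 - K, (C * p + c) * q + d * (2 * p) + 2 * p) ∈ pairMonoid p q := by
  rcases hK.eq_or_lt with rfl | hKpos
  · have hrest : 0 ≤ C * p + c := add_nonneg (mul_nonneg (by lia) hp) hc
    convert g_combination_mem_pairMonoid (p := p) (q := q) (d := d + 1) hrest (by lia) le_rfl
      le_rfl using 2 <;> ring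
  · have hrest : 0 ≤ (C - 2 * K) * p + c := add_nonneg (mul_nonneg (by lia) hp) hc
    convert add_mem (add_mem
      (h_mem_pairMonoid (p := p) (q := q) (j := K - 1) (by lia) (by lia))
      (h_mem_pairMonoid (j := 0) le_rfl (by lia)))
      (g_combination_mem_pairMonoid hrest hd le_rfl le_rfl) using 1
    ext <;> simp only [Prod.fst_add, Prod.snd_add] <;> ring

theorem splitsAt_of_eq_mul (hq : 0 < q) {c : ℤ} (hb : 0 ≤ c * q) (hbq : c * q ≤ q ^ 2) :
    SplitsAt (pairMonoid p q) (q, q ^ 2) (c * q) := by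
  have mem : ∀ k : ℤ, 0 ≤ k → (k, k * q) ∈ pairMonoid p q := fun k hk => by
    simpa using g_combination_mem_pairMonoid (p := p) (q := q) hk le_rfl le_rfl le_rfl
  have hcq : c ≤ q := le_of_mul_le_mul_right (by linarith) hq
  refine ⟨c, mem c (nonneg_of_mul_nonneg_left hb hq), ?_⟩
  convert mem (q - c) (by linarith) using 1
  rw [Prod.mk_sub_mk]
  ext <;> ring

-- Passing from `b` to `q² - b` reflects the digits `C`, `x`, `d`, `e`, `f` of `b`; in particular
-- `C` becomes `2 * p - 1 - C`. This splitting and the next two use the largest saving available on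
-- both sides, and the two first coordinates then add up to exactly `q`.
theorem splitsAt_of_not_dvd {C x d e f : ℤ} (hq : q = 2 * p ^ 2) (hC : 0 ≤ C) (hCp : C < 2 * p)
    (hx : 0 ≤ x) (hxp : x < p) (hd : 0 ≤ d) (hdp : d < p) (he : 0 ≤ e) (he1 : e ≤ 1)
    (hf : 0 ≤ f) (hfp : f + 2 ≤ p) :
    SplitsAt (pairMonoid p q) (q, q ^ 2)
      ((C * p + x) * q + d * (2 * p) + e * p + f + 1) := by
  refine ⟨_, f_combination_mem_pairMonoid hC hCp hx hd he hf, ?_⟩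
  convert f_combination_mem_pairMonoid (p := p) (q := q) (C := 2 * p - 1 - C) (c := p - 1 - x)
    (d := p - 1 - d) (e := 1 - e) (f := p - 2 - f) (by lia) (by lia) (by lia) (by lia) (by lia)
    (by lia) using 1
  ext <;> simp only [Prod.mk_sub_mk, hq] <;> ring

theorem splitsAt_of_odd_mul {C x d : ℤ} (hq : q = 2 * p ^ 2) (hC : 0 ≤ C) (hCp : C < 2 * p)
    (hx : 0 ≤ x) (hxp : x < p) (hd : 0 ≤ d) (hdp : d < p) :
    SplitsAt (pairMonoid p q) (q, q ^ 2) ((C * p + x) * q + d * (2 * p) + p) := by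
  have hp : 0 ≤ p := by lia
  have hhalves : (2 * p - 1 - C + 1) / 2 = p - (C + 1) / 2 := by lia
  refine ⟨_, h_combination_mem_pairMonoid (K := (C + 1) / 2) hp hC hCp hx hd (by lia) (by lia), ?_⟩
  convert h_combination_mem_pairMonoid (p := p) (q := q) (C := 2 * p - 1 - C) (c := p - 1 - x)
    (d := p - 1 - d) (K := (2 * p - 1 - C + 1) / 2) hp (by lia) (by lia) (by lia) (by lia) (by lia)
    (by lia) using 1
  rw [hhalves]
  ext <;> simp only [Prod.mk_sub_mk, hq] <;> ring

theorem splitsAt_of_even_mul {C x d : ℤ} (hq : q = 2 * p ^ 2) (hC : 0 ≤ C) (hCp : C < 2 * p)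
    (hx : 0 ≤ x) (hxp : x < p) (hd : 0 ≤ d) (hdp : d + 2 ≤ p) :
    SplitsAt (pairMonoid p q) (q, q ^ 2) ((C * p + x) * q + d * (2 * p) + 2 * p) := by
  have hp : 0 ≤ p := by lia
  have hhalves : (2 * p - 1 - C) / 2 = p - 1 - C / 2 := by lia
  refine ⟨_, two_h_combination_mem_pairMonoid (K := C / 2) hp hCp hx hd (by lia) (by lia), ?_⟩
  convert two_h_combination_mem_pairMonoid (p := p) (q := q) (C := 2 * p - 1 - C)
    (c := p - 1 - x) (d := p - 2 - d) (K := (2 * p - 1 - C) / 2) hp (by lia) (by lia) (by lia)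
    (by lia) (by lia) using 1
  rw [hhalves]
  ext <;> simp only [Prod.mk_sub_mk, hq] <;> ring

theorem splitsAt_of_remainder_pos {C x r : ℤ} (hq : q = 2 * p ^ 2) (hC : 0 ≤ C) (hCp : C < 2 * p)
    (hx : 0 ≤ x) (hxp : x < p) (hr : 0 < r) (hrq : r < q) :
    SplitsAt (pairMonoid p q) (q, q ^ 2) ((C * p + x) * q + r) := by
  have hp : 0 < p := by lia
  obtain ⟨u, f, hf, hfp, rfl⟩ : ∃ u f, 0 ≤ f ∧ f < p ∧ r = u * p + f :=
    ⟨r / p, r % p, Int.emod_nonneg _ hp.ne', Int.emod_lt_of_pos _ hp,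
      by rw [mul_comm, Int.mul_ediv_add_emod]⟩
  obtain ⟨d, e, he, he1, rfl⟩ : ∃ d e, 0 ≤ e ∧ e ≤ 1 ∧ u = 2 * d + e :=
    ⟨u / 2, u % 2, by lia, by lia, by lia⟩
  have hu : 0 ≤ 2 * d + e := by
    by_contra! hneg
    nlinarith
  have hup : 2 * d + e < 2 * p := lt_of_mul_lt_mul_right (by nlinarith) hp.le
  rcases hf.eq_or_lt with rfl | hfpos
  · obtain rfl | rfl : e = 0 ∨ e = 1 := by lia
    · have hdpos : d ≠ 0 := by rintro rfl; simp at hr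
      convert splitsAt_of_even_mul (d := d - 1) hq hC hCp hx hxp (by lia) (by lia) using 1
      ring
    · convert splitsAt_of_odd_mul (d := d) hq hC hCp hx hxp (by lia) (by lia) using 1
      ring
  · convert splitsAt_of_not_dvd (d := d) (f := f - 1) hq hC hCp hx hxp (by lia) (by lia) he he1
      (by lia) (by lia) using 1
    ring

theorem splitsAt_pairMonoid (hp : 0 < p) (hq : q = 2 * p ^ 2) {b : ℤ} (hb : 0 ≤ b)
    (hbq : b ≤ q ^ 2) : SplitsAt (pairMonoid p q) (q, q ^ 2) b := by
  have hqpos : 0 < q := by rw [hq]; positivity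
  obtain ⟨c, r, hr, hrq, rfl⟩ : ∃ c r, 0 ≤ r ∧ r < q ∧ b = c * q + r :=
    ⟨b / q, b % q, Int.emod_nonneg _ hqpos.ne', Int.emod_lt_of_pos _ hqpos,
      by rw [mul_comm, Int.mul_ediv_add_emod]⟩
  rcases hr.eq_or_lt with rfl | hrpos
  · rw [add_zero] at hb hbq ⊢
    exact splitsAt_of_eq_mul hqpos hb hbq
  · have hc : 0 ≤ c := by
      by_contra! hneg
      nlinarith
    have hcq : c < p * (2 * p) := lt_of_mul_lt_mul_right (by nlinarith) hqpos.le
    have hdiv : c = c / p * p + c % p := by rw [mul_comm, Int.mul_ediv_add_emod]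
    rw [hdiv]
    exact splitsAt_of_remainder_pos hq (Int.ediv_nonneg hc hp.le)
      (Int.ediv_lt_of_lt_mul hp (by linarith)) (Int.emod_nonneg _ hp.ne') (Int.emod_lt_of_pos _ hp)
      hrpos hrq

end PairMonoid

section LowerBound

/-- Bookkeeping for a sum `(a, b)` of generators of `pairMonoid p q`: the second coordinates of the
summands use `X` times `q`, `x` times `2 * p`, `Y` times `p` and `Z` times `1`, and `S` is the total
saving, that is, the amount by which the `f`s and `h`s undercut that number of terms in the first
coordinate. The last three fields bound the saving: `f_i` saves `i + 1` with `X = (i + 1) * p`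
and `Z = 1`, while `h_j` saves `j + 1` with `X = (2 * j + 1) * p` and `Y = 1`. -/
structure IsTermCount (p q a b X x Y Z S : ℤ) : Prop where
  X_nonneg : 0 ≤ X
  x_nonneg : 0 ≤ x
  Y_nonneg : 0 ≤ Y
  Z_nonneg : 0 ≤ Z
  snd_eq : b = X * q + x * (2 * p) + Y * p + Z
  le_fst_add : X + x + Y + Z ≤ a + S
  mul_saving_le : p * S ≤ X
  two_mul_saving_le : 2 * p * S ≤ X + p * Y + p * (2 * p - 1) * Z
  saving_le : S ≤ (2 * p - 1) * Z + (p - 1) * Y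

variable {p q a b X x Y Z S : ℤ}

theorem IsTermCount.add {a' b' X' x' Y' Z' S' : ℤ} (h : IsTermCount p q a b X x Y Z S)
    (h' : IsTermCount p q a' b' X' x' Y' Z' S') :
    IsTermCount p q (a + a') (b + b') (X + X') (x + x') (Y + Y') (Z + Z') (S + S') where
  X_nonneg := add_nonneg h.X_nonneg h'.X_nonneg
  x_nonneg := add_nonneg h.x_nonneg h'.x_nonneg
  Y_nonneg := add_nonneg h.Y_nonneg h'.Y_nonneg
  Z_nonneg := add_nonneg h.Z_nonneg h'.Z_nonneg
  snd_eq := by linarith [h.snd_eq, h'.snd_eq]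
  le_fst_add := by linarith [h.le_fst_add, h'.le_fst_add]
  mul_saving_le := by linarith [h.mul_saving_le, h'.mul_saving_le]
  two_mul_saving_le := by linarith [h.two_mul_saving_le, h'.two_mul_saving_le]
  saving_le := by linarith [h.saving_le, h'.saving_le]

theorem isTermCount_f {i : ℤ} (hi : 0 ≤ i) (hip : i + 2 ≤ 2 * p) :
    IsTermCount p q ((i + 1) * p - i) ((i + 1) * p * q + 1) ((i + 1) * p) 0 0 1 (i + 1) := by
  constructor <;> nlinarith

theorem isTermCount_h {j : ℤ} (hj : 0 ≤ j) (hjp : j + 2 ≤ p) :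
    IsTermCount p q ((2 * j + 1) * p - j) ((2 * j + 1) * p * q + p) ((2 * j + 1) * p) 0 1 0
      (j + 1) := by
  constructor <;> nlinarith

theorem exists_isTermCount_of_mem_pairGenerators (hp : 0 < p) {y : ℤ × ℤ}
    (hy : y ∈ pairGenerators p q) : ∃ X x Y Z S, IsTermCount p q y.1 y.2 X x Y Z S := by
  rcases hy with (hg | ⟨i, hi, hip, rfl⟩) | ⟨j, hj, hjp, rfl⟩
  · rcases hg with rfl | rfl | rfl | rfl | rfl
    · exact ⟨1, 0, 0, 0, 0, by constructor <;> simp⟩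
    · exact ⟨0, 1, 0, 0, 0, by constructor <;> simp⟩
    · exact ⟨0, 0, 1, 0, 0, by constructor <;> simp <;> lia⟩
    · exact ⟨0, 0, 0, 1, 0, by constructor <;> simp <;> nlinarith⟩
    · exact ⟨0, 0, 0, 0, 0, by constructor <;> simp⟩
  · exact ⟨_, _, _, _, _, isTermCount_f hi hip⟩
  · exact ⟨_, _, _, _, _, isTermCount_h hj hjp⟩

theorem exists_isTermCount_of_mem_pairMonoid (hp : 0 < p) {y : ℤ × ℤ} (hy : y ∈ pairMonoid p q) :
    ∃ X x Y Z S, IsTermCount p q y.1 y.2 X x Y Z S := by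
  induction hy using AddSubmonoid.closure_induction with
  | mem y hy => exact exists_isTermCount_of_mem_pairGenerators hp hy
  | zero => exact ⟨0, 0, 0, 0, 0, by constructor <;> simp⟩
  | add y z _ _ hy hz =>
    obtain ⟨X, x, Y, Z, S, h⟩ := hy
    obtain ⟨X', x', Y', Z', S', h'⟩ := hz
    exact ⟨_, _, _, _, _, h.add h'⟩

theorem IsTermCount.terms_le (h : IsTermCount p q a b X x Y Z S) (hp : 0 < p) :
    (p - 1) * X + p * (x + Y + Z) ≤ p * a := by
  have := mul_le_mul_of_nonneg_left h.le_fst_add hp.le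
  linarith [h.mul_saving_le]

theorem IsTermCount.snd_nonneg (h : IsTermCount p q a b X x Y Z S) (hp : 0 ≤ p) (hq : 0 ≤ q) :
    0 ≤ b := by
  obtain ⟨hX, hx, hY, hZ, rfl, -, -, -, -⟩ := h
  positivity

theorem IsTermCount.mul_snd_le (h : IsTermCount p q a b X x Y Z S) (hp : 0 < p)
    (hpq : 2 * p ≤ q) : (p - 1) * b ≤ p * q * a := by
  have hx := h.x_nonneg
  have hY := h.Y_nonneg
  have hZ := h.Z_nonneg
  have hx' : (p - 1) * (2 * p) * x ≤ p * q * x := by gcongr ?_ * x; nlinarith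
  have hY' : (p - 1) * p * Y ≤ p * q * Y := by gcongr ?_ * Y; nlinarith
  have hZ' : (p - 1) * Z ≤ p * q * Z := by gcongr ?_ * Z; nlinarith
  calc (p - 1) * b
      = (p - 1) * (X * q + x * (2 * p) + Y * p + Z) := by rw [h.snd_eq]
    _ ≤ q * ((p - 1) * X + p * (x + Y + Z)) := by linarith
    _ ≤ q * (p * a) := mul_le_mul_of_nonneg_left (h.terms_le hp) (by linarith)
    _ = p * q * a := by ring

-- `M` is the number of terms `q` traded for smaller ones, and `t = Z / p`.
theorem IsTermCount.exists_terms_eq (h : IsTermCount p q a (q ^ 2) X x Y Z S)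
    (hq : q = 2 * p ^ 2) : ∃ M t, X = q - M ∧ Z = p * t ∧ 2 * x + Y + t = 2 * p * M := by
  refine ⟨q - X, 2 * p * (q - X) - 2 * x - Y, by ring, ?_, by ring⟩
  have := h.snd_eq
  subst hq
  linarith

theorem eq_zero_of_terms_le {M t : ℤ} (hp : 0 < p) (hx : 0 ≤ x) (hY : 0 ≤ Y) (ht : 0 ≤ t)
    (hterms : 2 * x + Y + t = 2 * p * M) (hle : p * ((t - 2) * p + 1 + x + Y) ≤ (p - 1) * M) :
    t = 0 := by
  by_contra hne
  have hM : 1 ≤ M := pos_of_mul_pos_right (a := 2 * p) (by lia) (by lia)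
  obtain rfl | ht2 : t = 1 ∨ 2 ≤ t := by lia
  · have hxY : p * (p * M) ≤ p * (x + Y) := by gcongr; linarith
    have hpM : (p ^ 2 - p + 1) * 1 ≤ (p ^ 2 - p + 1) * M := by gcongr; nlinarith
    linarith
  · have htp : (t - 2) * 1 ≤ (t - 2) * p := by gcongr; lia
    have hmul : 1 * ((t - 2) * p + 1 + x + Y) ≤ p * ((t - 2) * p + 1 + x + Y) := by
      gcongr; lia
    linarith

theorem IsTermCount.le_fst_of_Z_eq_zero {M : ℤ} (h : IsTermCount p q a b (q - M) x Y 0 S)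
    (hp : 0 < p) (hq : q = 2 * p ^ 2) (hterms : 2 * x + Y = 2 * p * M) : q ≤ a := by
  have hx := h.x_nonneg
  have hY := h.Y_nonneg
  have hM : 0 ≤ M := nonneg_of_mul_nonneg_right (a := 2 * p) (by linarith) (by linarith)
  have hcount := h.le_fst_add
  rcases hM.eq_or_lt with rfl | hM
  · obtain rfl : Y = 0 := by linarith
    linarith [h.saving_le]
  · have hsaving : 2 * S - Y < 2 * p := by
      refine lt_of_mul_lt_mul_left (a := p) ?_ hp.le
      linarith [h.two_mul_saving_le]
    have hMp : 0 ≤ (p - 1) * (M - 1) := mul_nonneg (by lia) (by lia)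
    have hterms_ge : p * M - p + 1 ≤ x + Y - S := by lia
    linarith

theorem IsTermCount.le_fst (h : IsTermCount p q a (q ^ 2) X x Y Z S) (hp : 0 < p)
    (hq : q = 2 * p ^ 2) : q ≤ a := by
  by_contra! ha
  obtain ⟨M, t, rfl, rfl, hterms⟩ := h.exists_terms_eq hq
  have ht : 0 ≤ t := nonneg_of_mul_nonneg_right h.Z_nonneg hp
  have hle : p * ((t - 2) * p + 1 + x + Y) ≤ (p - 1) * M := by
    have := h.terms_le hp
    have : p * a ≤ p * (q - 1) := by gcongr; lia
    subst hq
    linarith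
  obtain rfl := eq_zero_of_terms_le hp h.x_nonneg h.Y_nonneg ht hterms hle
  rw [mul_zero] at h
  rw [add_zero] at hterms
  exact ha.not_ge (h.le_fst_of_Z_eq_zero hp hq hterms)

theorem notMem_pairMonoid (hp : 2 ≤ p) (hq : q = 2 * p ^ 2) (k : ℤ) :
    (q - 2 + k, k * (q ^ 2 + 1) - 1) ∉ pairMonoid p q := by
  intro hmem
  have hp0 : 0 < p := by lia
  have hpq : 4 * p ≤ q := by nlinarith
  obtain ⟨X, x, Y, Z, S, h⟩ := exists_isTermCount_of_mem_pairMonoid hp0 hmem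
  obtain hk | rfl | hk : k ≤ 0 ∨ k = 1 ∨ 2 ≤ k := by lia
  · have := h.snd_nonneg hp0.le (by lia)
    nlinarith
  · rw [one_mul, add_sub_cancel_right] at h
    linarith [h.le_fst hp0 hq]
  · have hslope := h.mul_snd_le hp0 (by lia)
    have hstep : p * q ≤ (p - 1) * (q ^ 2 + 1) := by nlinarith
    have hk_mul : 0 ≤ (k - 2) * ((p - 1) * (q ^ 2 + 1) - p * q) :=
      mul_nonneg (by lia) (by linarith)
    have hp_mul : 0 ≤ (p - 2) * q ^ 2 := mul_nonneg (by lia) (sq_nonneg q)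
    linarith

end LowerBound

section Semigroup

theorem natCast_f_eq {p g g' : ℕ} (h : g' + 1 ≤ p * g) (i : ℕ) :
    (((i + 1) * p * g - i * g' - 1 : ℕ) : ℤ) = (i + 1) * p * g - i * g' - 1 := by
  have hle : i * g' + 1 ≤ (i + 1) * p * g := by nlinarith
  rw [Nat.sub_sub, Nat.cast_sub hle]
  push_cast
  ring

theorem natCast_h_eq {p g g' : ℕ} (h : g' + 1 ≤ p * g) (j : ℕ) :
    (((2 * j + 1) * p * g - j * g' - p : ℕ) : ℤ) = (2 * j + 1) * p * g - j * g' - p := by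
  have hg : 0 < g := Nat.pos_of_ne_zero (by rintro rfl; simp at h)
  have hle : j * g' + p ≤ (2 * j + 1) * p * g := by nlinarith
  rw [Nat.sub_sub, Nat.cast_sub hle]
  push_cast
  ring

theorem natCast_image_f {p g g' : ℕ} {q : ℤ} (h : g' + 1 ≤ p * g) (hg : (g : ℤ) = g' - q) :
    Nat.castAddMonoidHom ℤ ''
        {x | ∃ i : ℕ, i + 2 ≤ 2 * p ∧ x = (i + 1) * p * g - i * g' - 1} =
      pairValue g' '' {x | ∃ i : ℤ, 0 ≤ i ∧ i + 2 ≤ 2 * (p : ℤ) ∧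
        x = ((i + 1) * p - i, (i + 1) * p * q + 1)} := by
  have value_f (i : ℕ) : pairValue g' ((i + 1) * p - i, (i + 1) * p * q + 1) =
      (((i + 1) * p * g - i * g' - 1 : ℕ) : ℤ) := by
    rw [natCast_f_eq h, hg, pairValue_apply]
    ring
  ext n
  constructor
  · rintro ⟨_, ⟨i, hip, rfl⟩, rfl⟩
    exact ⟨_, ⟨i, by positivity, by exact_mod_cast hip, rfl⟩, value_f i⟩
  · rintro ⟨_, ⟨i, hi, hip, rfl⟩, rfl⟩
    lift i to ℕ using hi
    exact ⟨_, ⟨i, by exact_mod_cast hip, rfl⟩, (value_f i).symm⟩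

theorem natCast_image_h {p g g' : ℕ} {q : ℤ} (h : g' + 1 ≤ p * g) (hg : (g : ℤ) = g' - q) :
    Nat.castAddMonoidHom ℤ ''
        {x | ∃ j : ℕ, j + 2 ≤ p ∧ x = (2 * j + 1) * p * g - j * g' - p} =
      pairValue g' '' {x | ∃ j : ℤ, 0 ≤ j ∧ j + 2 ≤ (p : ℤ) ∧
        x = ((2 * j + 1) * p - j, (2 * j + 1) * p * q + p)} := by
  have value_h (j : ℕ) : pairValue g' ((2 * j + 1) * p - j, (2 * j + 1) * p * q + p) =
      (((2 * j + 1) * p * g - j * g' - p : ℕ) : ℤ) := by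
    rw [natCast_h_eq h, hg, pairValue_apply]
    ring
  ext n
  constructor
  · rintro ⟨_, ⟨j, hjp, rfl⟩, rfl⟩
    exact ⟨_, ⟨j, by positivity, by exact_mod_cast hjp, rfl⟩, value_h j⟩
  · rintro ⟨_, ⟨j, hj, hjp, rfl⟩, rfl⟩
    lift j to ℕ using hj
    exact ⟨_, ⟨j, by exact_mod_cast hjp, rfl⟩, (value_h j).symm⟩

theorem natCast_image_generators {q₀ q g₀ g₁ g₂ g₃ g₄ : ℕ} (hq₀ : 2 ≤ q₀) (hq : q = 2 * q₀ ^ 2)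
    (hg₀ : g₀ = q ^ 2 - q + 1) (hg₁ : g₁ = q ^ 2 - 2 * q₀ + 1)
    (hg₂ : g₂ = q ^ 2 - q₀ + 1) (hg₃ : g₃ = q ^ 2) (hg₄ : g₄ = q ^ 2 + 1) :
    Nat.castAddMonoidHom ℤ '' ({g₀, g₁, g₂, g₃, g₄} ∪
        {x | ∃ i : ℕ, i + 2 ≤ 2 * q₀ ∧ x = (i + 1) * q₀ * g₀ - i * g₄ - 1} ∪
        {x | ∃ j : ℕ, j + 2 ≤ q₀ ∧ x = (2 * j + 1) * q₀ * g₀ - j * g₄ - q₀}) =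
      pairValue g₄ '' pairGenerators q₀ q := by
  have hqq₀ : 4 * q₀ ≤ q := by nlinarith
  have hqq : 2 * q ≤ q ^ 2 := by nlinarith
  have cast_g₀ : (g₀ : ℤ) = g₄ - q := by lia
  have cast_g₁ : (g₁ : ℤ) = g₄ - 2 * q₀ := by lia
  have cast_g₂ : (g₂ : ℤ) = g₄ - q₀ := by lia
  have cast_g₃ : (g₃ : ℤ) = g₄ - 1 := by lia
  have hg₄_lt : g₄ + 1 ≤ q₀ * g₀ :=
    calc g₄ + 1 ≤ 2 * g₀ := by lia
      _ ≤ q₀ * g₀ := by gcongr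
  rw [pairGenerators, Set.image_union, Set.image_union, Set.image_union, Set.image_union,
    natCast_image_f hg₄_lt cast_g₀, natCast_image_h hg₄_lt cast_g₀]
  simp only [Set.image_insert_eq, Set.image_singleton, pairValue_apply, Nat.coe_castAddMonoidHom,
    one_mul, sub_zero, cast_g₀, cast_g₁, cast_g₂, cast_g₃]

end Semigroup

theorem isSymmetricAbout_map_pairMonoid {p q : ℤ} (hp : 2 ≤ p) (hq : q = 2 * p ^ 2) :
    IsSymmetricAbout ((pairMonoid p q).map (pairValue (q ^ 2 + 1)))
      ((q - 2) * (q ^ 2 + 1) + 1) := by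
  refine isSymmetricAbout_map_pairValue one_zero_mem_pairMonoid (by positivity)
    (fun b hb hbm => ?_) (notMem_pairMonoid hp hq)
  simpa using splitsAt_pairMonoid (by lia) hq hb (by lia)

theorem stmt_10_general (q₀ q g₀ g₁ g₂ g₃ g₄ : ℕ)
    (hq₀ : 2 ≤ q₀) (hq : q = 2 * q₀ ^ 2)
    (hg₀ : g₀ = q ^ 2 - q + 1) (hg₁ : g₁ = q ^ 2 - 2 * q₀ + 1)
    (hg₂ : g₂ = q ^ 2 - q₀ + 1) (hg₃ : g₃ = q ^ 2) (hg₄ : g₄ = q ^ 2 + 1)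
    (H : AddSubmonoid ℕ)
    (hH : H = AddSubmonoid.closure
      ({g₀, g₁, g₂, g₃, g₄} ∪
        {x | ∃ i : ℕ, i + 2 ≤ 2 * q₀ ∧ x = (i + 1) * q₀ * g₀ - i * g₄ - 1} ∪
        {x | ∃ j : ℕ, j + 2 ≤ q₀ ∧ x = (2 * j + 1) * q₀ * g₀ - j * g₄ - q₀})) :
    {n : ℕ | n ∉ H}.ncard = q * (q - 1) ^ 2 / 2 := by
  have map_eq : H.map (Nat.castAddMonoidHom ℤ) = (pairMonoid q₀ q).map (pairValue g₄) := by
    rw [hH, pairMonoid, AddMonoidHom.map_mclosure, AddMonoidHom.map_mclosure,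
      natCast_image_generators hq₀ hq hg₀ hg₁ hg₂ hg₃ hg₄]
  obtain ⟨r, rfl⟩ : ∃ r, q = r + 2 := Nat.exists_eq_add_of_le' (by nlinarith)
  have symmetric : IsSymmetricAbout (H.map (Nat.castAddMonoidHom ℤ)) (r * g₄ + 1 : ℕ) := by
    have h := isSymmetricAbout_map_pairMonoid (p := q₀) (q := (r + 2 : ℕ))
      (by exact_mod_cast hq₀) (by exact_mod_cast hq)
    simpa [map_eq, hg₄] using h
  have frobenius_add_one : r * g₄ + 1 + 1 = (r + 2) * (r + 2 - 1) ^ 2 := by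
    rw [hg₄, Nat.add_succ_sub_one]
    ring
  have := two_mul_ncard_gaps_of_isSymmetricAbout symmetric
  lia

/-- The numerical semigroup `H` generated by `g₀ = q²−q+1`, `g₁ = q²−2q₀+1`,
`g₂ = q²−q₀+1`, `g₃ = q²`, `g₄ = q²+1`, `f_i = (i+1)q₀g₀ − i·g₄ − 1`
(`i = 0,…,2q₀−2`) and `h_j = (2j+1)q₀g₀ − j·g₄ − q₀` (`j = 0,…,q₀−2`) has
exactly `q(q−1)²/2` gaps. -/
theorem stmt_10 (s : ℕ) (hs : 1 ≤ s) (q₀ q g₀ g₁ g₂ g₃ g₄ : ℕ)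
    (hq₀ : q₀ = 2 ^ s) (hq : q = 2 * q₀ ^ 2)
    (hg₀ : g₀ = q ^ 2 - q + 1) (hg₁ : g₁ = q ^ 2 - 2 * q₀ + 1)
    (hg₂ : g₂ = q ^ 2 - q₀ + 1) (hg₃ : g₃ = q ^ 2) (hg₄ : g₄ = q ^ 2 + 1)
    (H : AddSubmonoid ℕ)
    (hH : H = AddSubmonoid.closure
      ({g₀, g₁, g₂, g₃, g₄} ∪
        {x | ∃ i : ℕ, i + 2 ≤ 2 * q₀ ∧ x = (i + 1) * q₀ * g₀ - i * g₄ - 1} ∪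
        {x | ∃ j : ℕ, j + 2 ≤ q₀ ∧ x = (2 * j + 1) * q₀ * g₀ - j * g₄ - q₀})) :
    {n : ℕ | n ∉ H}.ncard = q * (q - 1) ^ 2 / 2 :=
  stmt_10_general q₀ q g₀ g₁ g₂ g₃ g₄ (hq₀ ▸ Nat.le_self_pow (by lia) 2) hq hg₀ hg₁ hg₂ hg₃ hg₄ H hH
end
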